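/- arXiv:2112.13978 — 3 statements merged into one kernel-verified Lean document; each statement's English description precedes it below -/
import Mathlib

section
/- Let n ≥ 2 and let f be a Schwartz function on ℝⁿ. Then for every x ∈ ℝⁿ, the normal operator of the X-ray transform satisfies X'Xf(x) = ∫_{S^{n-1}} ∫_ℝ f(x+sθ) ds dθ = 2 ∫_{ℝⁿ} f(y)/|x-y|^{n-1} dy. -/
open MeasureTheory Metric Real

/-- The `n`-dimensional Euclidean space. -/
abbrev Euc (n : ℕ) := EuclideanSpace ℝ (Fin n)

/-- The standard surface measure on the unit sphere `S^{n-1} ⊂ ℝⁿ`. -/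
noncomputable def sphereMeasure (n : ℕ) : Measure (sphere (0 : Euc n) 1) :=
  (volume : Measure (Euc n)).toSphere

/-- The surface measure `|S^{n-1}|` of the unit sphere in `ℝⁿ`. -/
noncomputable def sphereVol (n : ℕ) : ℝ := (sphereMeasure n Set.univ).toReal

/-- The X-ray transform `Xf(x,θ) = ∫_ℝ f(x+sθ) ds`. -/
noncomputable def Xray {n : ℕ} (f : Euc n → ℝ) (x θ : Euc n) : ℝ :=
  ∫ s : ℝ, f (x + s • θ)

/-- The normal operator `X'Xf(x) = ∫_{S^{n-1}} Xf(x,θ) dθ`. -/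
noncomputable def normalOp {n : ℕ} (f : Euc n → ℝ) (x : Euc n) : ℝ :=
  ∫ θ : sphere (0 : Euc n) 1, Xray f x (θ : Euc n) ∂(sphereMeasure n)

/-- The single pixel X-ray transform `Kf(x) = ∫_{S^{n-1}} e^{-Xf(x,θ)} dθ`. -/
noncomputable def singlePixel {n : ℕ} (f : Euc n → ℝ) (x : Euc n) : ℝ :=
  ∫ θ : sphere (0 : Euc n) 1, Real.exp (-(Xray f x (θ : Euc n))) ∂(sphereMeasure n)

/-- The Fourier transform `𝓕f(ξ) = ∫ e^{-i x·ξ} f(x) dx`. -/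
noncomputable def FT {n : ℕ} (f : Euc n → ℝ) (ξ : Euc n) : ℂ :=
  ∫ x : Euc n, Complex.exp (-(Complex.I * ((inner ℝ x ξ : ℝ) : ℂ))) * (f x : ℂ)

/-- The inverse Fourier transform `𝓕⁻¹g(x) = (2π)^{-n} ∫ e^{i x·ξ} g(ξ) dξ`. -/
noncomputable def invFT {n : ℕ} (g : Euc n → ℂ) (x : Euc n) : ℂ :=
  ((((2 * π) ^ n)⁻¹ : ℝ) : ℂ) * ∫ ξ : Euc n, Complex.exp (Complex.I * ((inner ℝ x ξ : ℝ) : ℂ)) * g ξ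

/-- The `L²(ℝⁿ)` norm `(∫ |f|²)^{1/2}`. -/
noncomputable def L2norm {n : ℕ} (f : Euc n → ℝ) : ℝ :=
  (∫ x : Euc n, f x ^ 2) ^ ((1 : ℝ) / 2)

/-- The `H¹(U)` norm `(∫_U |u|²)^{1/2} + (∫_U |∇u|²)^{1/2}`. -/
noncomputable def H1norm {n : ℕ} (U : Set (Euc n)) (u : Euc n → ℝ) : ℝ :=
  (∫ x in U, u x ^ 2) ^ ((1 : ℝ) / 2) + (∫ x in U, ‖fderiv ℝ u x‖ ^ 2) ^ ((1 : ℝ) / 2)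

section Polar

variable {E F : Type*} [NormedAddCommGroup E] [NormedSpace ℝ E] [NormedAddCommGroup F]

theorem norm_smul_homeomorphUnitSphereProd (z : ({0}ᶜ : Set E)) :
    ((homeomorphUnitSphereProd E z).2 : ℝ) • ((homeomorphUnitSphereProd E z).1 : E) = z := by
  rw [← homeomorphUnitSphereProd_symm_apply_coe, Homeomorph.symm_apply_apply]

variable [FiniteDimensional ℝ E] [MeasurableSpace E] [BorelSpace E]

/-- Integrability of an integrable function in polar coordinates. -/
theorem integrable_polar (μ : Measure E) [μ.IsAddHaarMeasure] {h : E → F} (hh : Integrable h μ) :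
    Integrable (fun p : sphere (0 : E) 1 × Set.Ioi (0 : ℝ) ↦ h ((p.2 : ℝ) • (p.1 : E)))
      (μ.toSphere.prod (Measure.volumeIoiPow (Module.finrank ℝ E - 1))) := by
  rw [← μ.measurePreserving_homeomorphUnitSphereProd.integrable_comp_emb
    (Homeomorph.measurableEmbedding _)]
  have hint : IntegrableOn h {0}ᶜ μ := hh.integrableOn
  rw [integrableOn_iff_comap_subtypeVal (measurableSet_singleton _).compl] at hint
  refine hint.congr (.of_forall fun z ↦ ?_)
  simp only [Function.comp_apply, norm_smul_homeomorphUnitSphereProd]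

variable [NormedSpace ℝ F]

theorem integral_volumeIoiPow (m : ℕ) (h : ℝ → F) :
    ∫ r : Set.Ioi (0 : ℝ), h r ∂Measure.volumeIoiPow m = ∫ r in Set.Ioi (0 : ℝ), r ^ m • h r := by
  simp only [Measure.volumeIoiPow, ENNReal.ofReal]
  rw [integral_withDensity_eq_integral_smul,
    integral_subtype_comap measurableSet_Ioi fun a ↦ Real.toNNReal (a ^ m) • h a,
    setIntegral_congr_fun measurableSet_Ioi fun r hr ↦ ?_]
  · rw [NNReal.smul_def, Real.coe_toNNReal _ (pow_nonneg hr.out.le _)]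
  · exact (measurable_subtype_coe.pow_const _).real_toNNReal

theorem integrable_integral_polar (μ : Measure E) [μ.IsAddHaarMeasure] {h : E → F}
    (hh : Integrable h μ) :
    Integrable (fun θ : sphere (0 : E) 1 ↦
      ∫ r in Set.Ioi (0 : ℝ), r ^ (Module.finrank ℝ E - 1) • h (r • (θ : E))) μ.toSphere := by
  simpa only [← integral_volumeIoiPow] using (integrable_polar μ hh).integral_prod_left

/-- Integration in polar coordinates. -/
theorem integral_polar [Nontrivial E] (μ : Measure E) [μ.IsAddHaarMeasure] {h : E → F}
    (hh : Integrable h μ) :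
    ∫ z, h z ∂μ = ∫ θ : sphere (0 : E) 1,
      (∫ r in Set.Ioi (0 : ℝ), r ^ (Module.finrank ℝ E - 1) • h (r • (θ : E))) ∂μ.toSphere := by
  have hfub := integral_prod _ (integrable_polar μ hh)
  have hsphere (θ : sphere (0 : E) 1) :=
    integral_volumeIoiPow (Module.finrank ℝ E - 1) fun r ↦ h (r • (θ : E))
  simp only [hsphere] at hfub
  rw [← hfub, ← μ.measurePreserving_homeomorphUnitSphereProd.integral_comp
    (Homeomorph.measurableEmbedding _)]
  simp only [norm_smul_homeomorphUnitSphereProd]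
  rw [integral_subtype_comap (measurableSet_singleton _).compl h, restrict_compl_singleton]

end Polar

theorem integral_pow_smul_div_norm_pow {E : Type*} [NormedAddCommGroup E] [NormedSpace ℝ E]
    (g : E → ℝ) (m : ℕ) (θ : sphere (0 : E) 1) :
    ∫ r in Set.Ioi (0 : ℝ), r ^ m • (g (r • (θ : E)) / ‖r • (θ : E)‖ ^ m) =
      ∫ r in Set.Ioi (0 : ℝ), g (r • (θ : E)) := by
  refine setIntegral_congr_fun measurableSet_Ioi fun r hr ↦ ?_
  have hr' : 0 < r := hr
  have hnorm : ‖r • (θ : E)‖ = r := by simp [norm_smul, abs_of_pos hr']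
  simp only [hnorm, smul_eq_mul]
  field_simp

namespace SchwartzMap

variable {E : Type*} [NormedAddCommGroup E] [NormedSpace ℝ E]

theorem exists_norm_le_inv_one_add_sq (g : SchwartzMap E ℝ) :
    ∃ C : ℝ, ∀ z, ‖g z‖ ≤ C * (1 + ‖z‖ ^ 2)⁻¹ := by
  obtain ⟨A, -, hA⟩ := g.decay 0 0
  obtain ⟨B, -, hB⟩ := g.decay 2 0
  refine ⟨A + B, fun z ↦ ?_⟩
  have hAz := hA z
  have hBz := hB z
  simp only [norm_iteratedFDeriv_zero, pow_zero, one_mul] at hAz hBz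
  rw [← div_eq_mul_inv, le_div_iff₀ (by positivity)]
  linarith

theorem integrable_comp_smul_of_norm_eq_one (g : SchwartzMap E ℝ) {θ : E} (hθ : ‖θ‖ = 1) :
    Integrable fun s : ℝ ↦ g (s • θ) := by
  obtain ⟨C, hC⟩ := g.exists_norm_le_inv_one_add_sq
  refine (integrable_inv_one_add_sq.const_mul C).mono' ?_ (.of_forall fun s ↦ ?_)
  · exact (g.continuous.comp (by fun_prop)).aestronglyMeasurable
  · simpa [norm_smul, hθ] using hC (s • θ)

variable [FiniteDimensional ℝ E] [Nontrivial E] [MeasurableSpace E] [BorelSpace E]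

theorem integrable_div_norm_pow (μ : Measure E) [μ.IsAddHaarMeasure] (g : SchwartzMap E ℝ) :
    Integrable (fun z ↦ g z / ‖z‖ ^ (Module.finrank ℝ E - 1)) μ := by
  obtain ⟨C, hC⟩ := g.exists_norm_le_inv_one_add_sq
  have hradial : Integrable
      (fun z : E ↦ C * (1 + ‖z‖ ^ 2)⁻¹ / ‖z‖ ^ (Module.finrank ℝ E - 1)) μ := by
    rw [integrable_fun_norm_addHaar μ
      (f := fun r : ℝ ↦ C * (1 + r ^ 2)⁻¹ / r ^ (Module.finrank ℝ E - 1))]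
    refine ((integrable_inv_one_add_sq.const_mul C).integrableOn).congr_fun
      (fun r hr ↦ ?_) measurableSet_Ioi
    have hr' : r ≠ 0 := (Set.mem_Ioi.1 hr).ne'
    simp only [smul_eq_mul]
    field_simp
  refine hradial.mono' ?_ (.of_forall fun z ↦ ?_)
  · exact (g.continuous.measurable.div (measurable_norm.pow_const _)).aestronglyMeasurable
  · rw [norm_div, norm_pow, norm_norm]
    gcongr
    exact hC z

/-- The integrals of a Schwartz function over all lines through the origin add up to twice its
integral against the kernel `‖z‖ ^ (1 - dim E)`. -/
theorem integral_sphere_integral_line (μ : Measure E) [μ.IsAddHaarMeasure]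
    (g : SchwartzMap E ℝ) :
    ∫ θ : sphere (0 : E) 1, (∫ s : ℝ, g (s • (θ : E))) ∂μ.toSphere =
      2 * ∫ z, g z / ‖z‖ ^ (Module.finrank ℝ E - 1) ∂μ := by
  have hpos := g.integrable_div_norm_pow μ
  have hneg : Integrable (fun z ↦ g (-z) / ‖z‖ ^ (Module.finrank ℝ E - 1)) μ := by
    simpa using hpos.comp_neg
  have hline (θ : sphere (0 : E) 1) : ∫ s : ℝ, g (s • (θ : E)) =
      (∫ r in Set.Ioi (0 : ℝ), g (-(r • (θ : E)))) + ∫ r in Set.Ioi (0 : ℝ), g (r • (θ : E)) := by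
    have hint := g.integrable_comp_smul_of_norm_eq_one (θ := (θ : E)) (by simp)
    rw [← intervalIntegral.integral_Iic_add_Ioi (b := 0) hint.integrableOn hint.integrableOn]
    congr 1
    simpa using (integral_comp_neg_Ioi 0 fun s : ℝ ↦ g (s • (θ : E))).symm
  have hpos_int := integrable_integral_polar μ hpos
  have hneg_int := integrable_integral_polar μ hneg
  have hpos_eq := integral_polar μ hpos
  have hneg_eq := integral_polar μ hneg
  simp only [integral_pow_smul_div_norm_pow g] at hpos_int hpos_eq
  simp only [integral_pow_smul_div_norm_pow fun z ↦ g (-z)] at hneg_int hneg_eq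
  have hsymm : ∫ z, g (-z) / ‖z‖ ^ (Module.finrank ℝ E - 1) ∂μ =
      ∫ z, g z / ‖z‖ ^ (Module.finrank ℝ E - 1) ∂μ := by
    simpa using integral_neg_eq_self (fun z ↦ g z / ‖z‖ ^ (Module.finrank ℝ E - 1)) μ
  simp only [hline]
  rw [integral_add hneg_int hpos_int, ← hneg_eq, ← hpos_eq, hsymm, two_mul]

end SchwartzMap

/-- For `n ≥ 2` and a Schwartz function `f` on `ℝⁿ`, the normal operator of the
X-ray transform satisfies `X'Xf(x) = ∫_{S^{n-1}} ∫_ℝ f(x+sθ) ds dθ = 2 ∫ f(y)/|x-y|^{n-1} dy`. -/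
theorem normalOp_eq_double_integral_and_kernel (n : ℕ) (hn : 2 ≤ n)
    (f : SchwartzMap (Euc n) ℝ) (x : Euc n) :
    normalOp (fun y => f y) x =
      (∫ θ : sphere (0 : Euc n) 1, (∫ s : ℝ, f (x + s • (θ : Euc n))) ∂(sphereMeasure n)) ∧
    normalOp (fun y => f y) x = 2 * ∫ y : Euc n, f y / ‖x - y‖ ^ (n - 1) := by
  refine ⟨rfl, ?_⟩
  have : Nontrivial (Fin n) := Fin.nontrivial_iff_two_le.2 hn
  have hmain := (f.compSubConstCLM ℝ (-x)).integral_sphere_integral_line volume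
  simp only [SchwartzMap.compSubConstCLM_apply, sub_neg_eq_add, finrank_euclideanSpace_fin]
    at hmain
  have hshift := integral_add_right_eq_self (μ := (volume : Measure (Euc n)))
    (fun y ↦ f y / ‖x - y‖ ^ (n - 1)) x
  simp only [sub_add_cancel_right, norm_neg] at hshift
  simp only [normalOp, Xray, sphereMeasure]
  rw [← hshift, ← hmain]
  simp only [add_comm x]
end

section
/- Let n ≥ 2 and let f : ℝⁿ → ℝ be continuous and compactly supported. Then for every x ∈ ℝⁿ, the single pixel X-ray transform admits the expansion Kf(x) = |S^{n-1}| − X'Xf(x) + ∫_{S^{n-1}} ( Σ_{m=2}^{∞} ((-1)^m / m!) (Xf(x,θ))^m ) dθ, where the series converges and the integral over S^{n-1} of the series is finite. -/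
open MeasureTheory Metric Real

/-- The X-ray transform of a continuous compactly supported function is continuous in the
direction. -/
theorem continuous_Xray_sphere {n : ℕ} {f : Euc n → ℝ} (hf : Continuous f)
    (hfc : HasCompactSupport f) (x : Euc n) :
    Continuous (fun θ : sphere (0 : Euc n) 1 => Xray f x (θ : Euc n)) := by
  obtain ⟨R, hR⟩ := hfc.isBounded.subset_closedBall 0
  rw [← continuousOn_univ]
  refine continuousOn_integral_of_compact_support
    (f := fun (θ : sphere (0 : Euc n) 1) (s : ℝ) => f (x + s • (θ : Euc n)))
    (isCompact_closedBall (0 : ℝ) (R + ‖x‖)) (by fun_prop) fun θ s _ hs => ?_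
  by_contra h
  refine hs ?_
  have hbound : ‖x + s • (θ : Euc n)‖ ≤ R := by
    simpa using hR (subset_tsupport f (Function.mem_support.2 h))
  have htri : ‖s • (θ : Euc n)‖ ≤ ‖x + s • (θ : Euc n)‖ + ‖x‖ := by
    simpa using norm_sub_le (x + s • (θ : Euc n)) x
  rw [norm_smul, norm_eq_of_mem_sphere θ, mul_one] at htri
  rw [mem_closedBall_zero_iff]
  linarith

/-- The Taylor remainder of order two of `t ↦ exp (-t)`, as a convergent series. -/
theorem hasSum_exp_neg_tail (t : ℝ) :
    HasSum (fun m : ℕ => (-1 : ℝ) ^ (m + 2) / (m + 2).factorial * t ^ (m + 2))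
      (Real.exp (-t) - 1 + t) := by
  have h : HasSum (fun m : ℕ => (-1 : ℝ) ^ m / m.factorial * t ^ m) (Real.exp (-t)) := by
    rw [Real.exp_eq_exp_ℝ]
    have hterm (m : ℕ) : (-1 : ℝ) ^ m / m.factorial * t ^ m = (-t) ^ m / m.factorial := by
      rw [neg_pow t]
      ring
    simpa only [hterm] using NormedSpace.expSeries_div_hasSum_exp (-t)
  have hsum : Real.exp (-t) - 1 + t =
      Real.exp (-t) - ∑ m ∈ Finset.range 2, (-1 : ℝ) ^ m / m.factorial * t ^ m := by
    simp [Finset.sum_range_succ]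
    ring
  rw [hsum]
  exact (hasSum_nat_add_iff' 2).2 h

/-- For `n ≥ 2` and `f` continuous with compact support,
`Kf(x) = |S^{n-1}| − X'Xf(x) + ∫_{S^{n-1}} Σ_{m=2}^∞ ((-1)^m/m!)(Xf(x,θ))^m dθ`, where the
series converges and its integral over the sphere is finite. -/
theorem singlePixel_taylor_expansion (n : ℕ) (hn : 2 ≤ n) (f : Euc n → ℝ)
    (hf : Continuous f) (hfc : HasCompactSupport f) (x : Euc n) :
    (∀ θ : sphere (0 : Euc n) 1,
      Summable (fun m : ℕ =>
        (-1 : ℝ) ^ (m + 2) / (m + 2).factorial * Xray f x (θ : Euc n) ^ (m + 2))) ∧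
    Integrable (fun θ : sphere (0 : Euc n) 1 =>
        ∑' m : ℕ, (-1 : ℝ) ^ (m + 2) / (m + 2).factorial * Xray f x (θ : Euc n) ^ (m + 2))
      (sphereMeasure n) ∧
    singlePixel f x = sphereVol n - normalOp f x +
      ∫ θ : sphere (0 : Euc n) 1,
        ∑' m : ℕ, (-1 : ℝ) ^ (m + 2) / (m + 2).factorial * Xray f x (θ : Euc n) ^ (m + 2)
        ∂(sphereMeasure n) := by
  have hX := continuous_Xray_sphere hf hfc x
  have : IsFiniteMeasure (sphereMeasure n) := by
    unfold sphereMeasure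
    infer_instance
  have integrable_cont {g : sphere (0 : Euc n) 1 → ℝ} (hg : Continuous g) :
      Integrable g (sphereMeasure n) :=
    hg.integrable_of_hasCompactSupport (HasCompactSupport.of_compactSpace g)
  have hexp : Continuous fun θ : sphere (0 : Euc n) 1 => Real.exp (-Xray f x (θ : Euc n)) := by
    fun_prop
  simp only [fun θ : sphere (0 : Euc n) 1 => (hasSum_exp_neg_tail (Xray f x (θ : Euc n))).tsum_eq]
  refine ⟨fun θ => (hasSum_exp_neg_tail _).summable, integrable_cont (by fun_prop), ?_⟩
  rw [integral_add (integrable_cont (by fun_prop)) (integrable_cont hX),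
    integral_sub (integrable_cont hexp) (integrable_const 1)]
  simp [singlePixel, normalOp, sphereVol, Measure.real]
end

section
/- Let n ≥ 3, let Ω ⊂ ℝⁿ be an open bounded set with smooth boundary, and let Ω₁ ⊂ ℝⁿ be an open bounded set with closure(Ω) ⊂ Ω₁. Then there exists a constant C > 0, depending on n, Ω, Ω₁, such that for every continuous g : ℝⁿ → ℝ supported in the closure of Ω, the function h(x) := lim_{ε→0} ε^{-1}( K[εg](x) − |S^{n-1}| ) satisfies C^{-1} ‖g‖_{L²(ℝⁿ)} ≤ ‖h‖_{H¹(Ω₁)}. -/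
open MeasureTheory Metric Real

open Set Filter Topology

section Polar

variable {n : ℕ}

/-- Integration in polar coordinates. -/
lemma integral_eq_integral_sphere_Ioi (hn : 0 < n) {f : Euc n → ℝ} (hf : Integrable f) :
    ∫ x, f x = ∫ θ, (∫ s in Ioi (0 : ℝ), s ^ (n - 1) * f (s • (θ : Euc n))) ∂(sphereMeasure n) := by
  have : Nonempty (Fin n) := ⟨⟨0, hn⟩⟩
  let μ : Measure (Euc n) := volume
  have hmp := μ.measurePreserving_homeomorphUnitSphereProd
  have hfin : Module.finrank ℝ (Euc n) = n := by simp
  let G : sphere (0 : Euc n) 1 × Ioi (0 : ℝ) → ℝ := fun p => f (p.2.1 • (p.1 : Euc n))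
  have hG : ∀ x : ({(0 : Euc n)}ᶜ : Set (Euc n)), G (homeomorphUnitSphereProd (Euc n) x) = f x := by
    intro x
    have hx : ‖x.1‖ ≠ 0 := norm_ne_zero_iff.2 x.2
    simp [G, smul_smul, hx]
  have hintg : Integrable G
      (μ.toSphere.prod (Measure.volumeIoiPow (Module.finrank ℝ (Euc n) - 1))) := by
    rw [← hmp.integrable_comp_emb (Homeomorph.measurableEmbedding _)]
    have : G ∘ (homeomorphUnitSphereProd (Euc n)) = f ∘ Subtype.val := funext hG
    rw [this, ← integrableOn_iff_comap_subtypeVal (measurableSet_singleton _).compl]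
    exact hf.integrableOn
  calc ∫ x, f x = ∫ x : ({(0 : Euc n)}ᶜ : Set (Euc n)), f x ∂(μ.comap (↑)) := by
        rw [integral_subtype_comap (measurableSet_singleton _).compl f, restrict_compl_singleton]
    _ = ∫ p, G p ∂(μ.toSphere.prod (Measure.volumeIoiPow (Module.finrank ℝ (Euc n) - 1))) := by
        rw [← hmp.integral_comp (Homeomorph.measurableEmbedding _)]
        exact integral_congr_ae (.of_forall fun x => (hG x).symm)
    _ = _ := by
        rw [integral_prod _ hintg]
        refine integral_congr_ae (.of_forall fun θ => ?_)
        simp only [Measure.volumeIoiPow, ENNReal.ofReal, hfin, G]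
        rw [integral_withDensity_eq_integral_smul,
          integral_subtype_comap measurableSet_Ioi
            fun a ↦ Real.toNNReal (a ^ (n - 1)) • f (a • (θ : Euc n)),
          setIntegral_congr_fun measurableSet_Ioi fun x hx ↦ ?_]
        · rw [NNReal.smul_def, Real.coe_toNNReal _ (pow_nonneg hx.out.le _), smul_eq_mul]
        · exact (measurable_subtype_coe.pow_const _).real_toNNReal

end Polar

/-- The squared distance `t² + ‖x‖²` from the origin to the point `(x, t)` of `ℝⁿ × ℝ`. -/
noncomputable def quad {n : ℕ} (x : Euc n) (t : ℝ) : ℝ := t ^ 2 + ‖x‖ ^ 2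

/-- The exponent `(n - 1) / 2` of the Newtonian kernel of `ℝⁿ × ℝ`. -/
noncomputable def kerExp (n : ℕ) : ℝ := ((n : ℝ) - 1) / 2

/-- The Newtonian potential of `g` at height `t` above `ℝⁿ`, up to a constant. -/
noncomputable def potential {n : ℕ} (g : Euc n → ℝ) (x : Euc n) (t : ℝ) : ℝ :=
  ∫ y, g y • quad (x - y) t ^ (-kerExp n)

section Quad

variable {n : ℕ}

lemma quad_pos (x : Euc n) {t : ℝ} (ht : 0 < t) : 0 < quad x t := by
  unfold quad; positivity

lemma continuous_quad : Continuous fun p : Euc n × ℝ => quad p.1 p.2 := by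
  unfold quad; fun_prop

lemma continuous_quad_rpow (b : ℝ) {t : ℝ} (ht : 0 < t) :
    Continuous fun x : Euc n => quad x t ^ b :=
  (continuous_quad.comp (by fun_prop : Continuous fun x : Euc n => (x, t))).rpow_const
    fun x => .inl (ne_of_gt (quad_pos x ht))

/-- The radial weight `s^(n-1) (t² + s²)^(-(n-1)/2)` is at most `1`. -/
lemma pow_mul_rpow_le_one (hn : 1 ≤ n) {s t : ℝ} (hs : 0 < s) :
    s ^ (n - 1) * (t ^ 2 + s ^ 2) ^ (-kerExp n) ≤ 1 := by
  have h1 : s ^ (n - 1) = (s ^ 2) ^ (kerExp n) := by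
    rw [← rpow_natCast s 2, ← rpow_mul hs.le, ← rpow_natCast, kerExp]
    congr 1; push_cast [hn]; ring
  have hk : 0 ≤ kerExp n := by
    unfold kerExp; have : (1 : ℝ) ≤ n := by exact_mod_cast hn
    linarith
  rw [rpow_neg (by positivity), h1, mul_inv_le_iff₀ (by positivity), one_mul]
  exact rpow_le_rpow (by positivity) (by nlinarith [sq_nonneg t]) hk

lemma tendsto_pow_mul_rpow (hn : 1 ≤ n) {s : ℝ} (hs : 0 < s) :
    Tendsto (fun t : ℝ => s ^ (n - 1) * (t ^ 2 + s ^ 2) ^ (-kerExp n)) (𝓝[>] 0) (𝓝 1) := by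
  have h1 : s ^ (n - 1) * ((0:ℝ) ^ 2 + s ^ 2) ^ (-kerExp n) = 1 := by
    have : s ^ (n - 1) = (s ^ 2) ^ (kerExp n) := by
      rw [← rpow_natCast s 2, ← rpow_mul hs.le, ← rpow_natCast, kerExp]
      congr 1; push_cast [hn]; ring
    rw [this, zero_pow two_ne_zero, zero_add, rpow_neg (by positivity)]
    exact mul_inv_cancel₀ (by positivity)
  rw [← h1]
  refine tendsto_nhdsWithin_of_tendsto_nhds (ContinuousAt.tendsto (f := fun t : ℝ =>
    s ^ (n - 1) * (t ^ 2 + s ^ 2) ^ (-kerExp n)) ?_)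
  refine continuousAt_const.mul (ContinuousAt.rpow_const (by fun_prop) (.inl ?_))
  positivity

end Quad

section Linearization

variable {n : ℕ} {g : Euc n → ℝ}

lemma apply_add_smul_eq_zero {R : ℝ} (hR : Function.support g ⊆ closedBall 0 R) (x : Euc n)
    (θ : sphere (0 : Euc n) 1) {s : ℝ} (hs : R + ‖x‖ < |s|) : g (x + s • (θ : Euc n)) = 0 := by
  by_contra h
  have h1 := hR h
  have h3 : ‖s • (θ : Euc n)‖ = |s| := by simp [norm_smul]
  have h4 : ‖s • (θ : Euc n)‖ ≤ ‖x + s • (θ : Euc n)‖ + ‖x‖ := by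
    simpa using norm_sub_le (x + s • (θ : Euc n)) x
  rw [mem_closedBall_zero_iff] at h1
  linarith

lemma integrable_line (hg : Continuous g) {R : ℝ} (hR : Function.support g ⊆ closedBall 0 R)
    (x : Euc n) (θ : sphere (0 : Euc n) 1) : Integrable fun s : ℝ => g (x + s • (θ : Euc n)) := by
  refine Continuous.integrable_of_hasCompactSupport (by fun_prop) ?_
  refine HasCompactSupport.of_support_subset_isCompact (isCompact_Icc (a := -(R + ‖x‖))
    (b := R + ‖x‖)) fun s hs => ?_
  by_contra h
  refine hs (apply_add_smul_eq_zero hR x θ ?_)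
  by_contra h'
  exact h (abs_le.1 (not_lt.1 h'))

lemma stronglyMeasurable_xray (hg : Continuous g) (x : Euc n) :
    StronglyMeasurable fun θ : sphere (0 : Euc n) 1 => Xray g x (θ : Euc n) := by
  unfold Xray
  refine StronglyMeasurable.integral_prod_right'
    (f := fun p : sphere (0 : Euc n) 1 × ℝ => g (x + p.2 • (p.1 : Euc n))) ?_
  exact Continuous.stronglyMeasurable (by fun_prop)

lemma abs_xray_le {B : ℝ} (hB : ∀ y, |g y| ≤ B) {R : ℝ} (hR0 : 0 ≤ R)
    (hR : Function.support g ⊆ closedBall 0 R) (x : Euc n) (θ : sphere (0 : Euc n) 1) :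
    |Xray g x (θ : Euc n)| ≤ B * (2 * (R + ‖x‖)) := by
  have h1 : Xray g x (θ : Euc n)
      = ∫ s in Icc (-(R + ‖x‖)) (R + ‖x‖), g (x + s • (θ : Euc n)) := by
    refine (setIntegral_eq_integral_of_forall_compl_eq_zero fun s hs => ?_).symm
    refine apply_add_smul_eq_zero hR x θ ?_
    by_contra h'
    exact hs (abs_le.1 (not_lt.1 h'))
  rw [h1]
  have := norm_setIntegral_le_of_norm_le_const (μ := volume) (C := B)
    (f := fun s : ℝ => g (x + s • (θ : Euc n))) (s := Icc (-(R + ‖x‖)) (R + ‖x‖))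
    (by simp) fun s _ => hB _
  rw [norm_eq_abs] at this
  refine this.trans (le_of_eq ?_)
  rw [measureReal_def, Real.volume_Icc, ENNReal.toReal_ofReal (by linarith [norm_nonneg x])]
  ring

/-- The derivative of the single pixel transform at `0` is minus the normal operator. -/
lemma tendsto_singlePixel_smul (hg : Continuous g) {B : ℝ} (hB : ∀ y, |g y| ≤ B) {R : ℝ}
    (hR0 : 0 ≤ R) (hR : Function.support g ⊆ closedBall 0 R) (x : Euc n) :
    Tendsto (fun ε : ℝ => ε⁻¹ * (singlePixel (fun y => ε * g y) x - sphereVol n))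
      (𝓝[≠] 0) (𝓝 (-normalOp g x)) := by
  have : IsFiniteMeasure (sphereMeasure n) := by unfold sphereMeasure; infer_instance
  set L := B * (2 * (R + ‖x‖)) with hL
  have hX := fun θ => abs_xray_le hB hR0 hR x θ
  have hXm := stronglyMeasurable_xray hg x
  have key := (hasDerivAt_integral_of_dominated_loc_of_deriv_le (𝕜 := ℝ)
    (μ := sphereMeasure n) (s := ball (0 : ℝ) 1) (x₀ := (0 : ℝ))
    (F := fun ε (θ : sphere (0 : Euc n) 1) => Real.exp (-(ε * Xray g x (θ : Euc n))))
    (F' := fun ε (θ : sphere (0 : Euc n) 1) =>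
      Real.exp (-(ε * Xray g x (θ : Euc n))) * (-Xray g x (θ : Euc n)))
    (bound := fun _ => Real.exp L * L) (ball_mem_nhds _ one_pos) ?_ ?_ ?_ ?_ ?_ ?_).2
  · have h2 := key.tendsto_slope_zero
    simp only [zero_add, zero_mul, neg_zero, Real.exp_zero, one_mul, smul_eq_mul,
      integral_neg] at h2
    rw [normalOp]
    convert h2 using 4 with ε
    · unfold singlePixel Xray
      simp only [integral_const_mul]
    · simp [sphereVol, measureReal_def]
  · refine .of_forall fun ε => ?_
    exact (Real.continuous_exp.comp_stronglyMeasurable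
      (hXm.const_mul ε).neg).aestronglyMeasurable
  · simp
  · exact (((Real.continuous_exp.comp_stronglyMeasurable
      (hXm.const_mul 0).neg)).mul hXm.neg).aestronglyMeasurable
  · refine .of_forall fun θ ε hε => ?_
    rw [norm_mul, norm_neg, Real.norm_eq_abs, Real.norm_eq_abs, Real.abs_exp]
    have hε' : |ε| ≤ 1 := by simpa using (mem_ball_zero_iff.1 hε).le
    have h3 : -(ε * Xray g x (θ : Euc n)) ≤ L := by
      refine (neg_le_abs _).trans ?_
      rw [abs_mul]
      exact (mul_le_of_le_one_left (abs_nonneg _) hε').trans (hX θ)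
    exact mul_le_mul (Real.exp_le_exp.2 h3) (hX θ) (abs_nonneg _) (Real.exp_pos _).le
  · exact integrable_const _
  · refine .of_forall fun θ ε _ => ?_
    have := ((hasDerivAt_id ε).mul_const (Xray g x (θ : Euc n))).neg.exp
    simpa using this

end Linearization

section PotentialLimit

variable {n : ℕ} {g : Euc n → ℝ}

lemma hasCompactSupport_of_support_subset {R : ℝ} (hR : Function.support g ⊆ closedBall 0 R) :
    HasCompactSupport g :=
  HasCompactSupport.of_support_subset_isCompact (isCompact_closedBall _ _) hR

/-- Polar coordinates for the potential. -/
lemma two_mul_potential_eq (hn : 1 ≤ n) (hg : Continuous g) {R : ℝ}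
    (hR : Function.support g ⊆ closedBall 0 R) (x : Euc n) {t : ℝ} (ht : 0 < t) :
    2 * potential g x t = ∫ θ : sphere (0 : Euc n) 1, (∫ s in Ioi (0 : ℝ),
      (s ^ (n - 1) * (t ^ 2 + s ^ 2) ^ (-kerExp n)) *
        (g (x + s • (θ : Euc n)) + g (x + (-s) • (θ : Euc n)))) ∂(sphereMeasure n) := by
  let f : Euc n → ℝ := fun z => quad z t ^ (-kerExp n) * (g (x + z) + g (x - z))
  have hq := continuous_quad_rpow (n := n) (-kerExp n) ht
  have hgc := hasCompactSupport_of_support_subset hR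
  have h1 : Integrable fun z => quad z t ^ (-kerExp n) * g (x + z) := by
    refine Continuous.integrable_of_hasCompactSupport (by fun_prop) (HasCompactSupport.mul_left ?_)
    exact hgc.comp_homeomorph (Homeomorph.addLeft x)
  have h2 : Integrable fun z => quad z t ^ (-kerExp n) * g (x - z) := by
    refine Continuous.integrable_of_hasCompactSupport (by fun_prop) (HasCompactSupport.mul_left ?_)
    exact hgc.comp_homeomorph (Homeomorph.subLeft x)
  have e2 : ∫ z, quad z t ^ (-kerExp n) * g (x - z) = potential g x t := by
    unfold potential
    rw [← integral_sub_left_eq_self _ _ x]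
    simp [mul_comm]
  have e1 : ∫ z, quad z t ^ (-kerExp n) * g (x + z) = potential g x t := by
    rw [← e2, ← integral_neg_eq_self]
    simp [quad, sub_eq_add_neg]
  have hf : Integrable f := by
    simp only [f, mul_add]
    exact h1.add h2
  have e3 : 2 * potential g x t = ∫ z, f z := by
    simp only [f, mul_add]
    rw [integral_add h1 h2, e1, e2, two_mul]
  rw [e3, integral_eq_integral_sphere_Ioi hn hf]
  refine integral_congr_ae (.of_forall fun θ => integral_congr_ae (.of_forall fun s => ?_))
  simp only [f, quad, norm_smul, norm_eq_of_mem_sphere, mul_one, norm_eq_abs, sq_abs, neg_smul,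
    sub_eq_add_neg]
  ring

lemma xray_eq_integral_Ioi (hg : Continuous g) {R : ℝ}
    (hR : Function.support g ⊆ closedBall 0 R) (x : Euc n) (θ : sphere (0 : Euc n) 1) :
    Xray g x (θ : Euc n) = ∫ s in Ioi (0 : ℝ),
        (g (x + s • (θ : Euc n)) + g (x + (-s) • (θ : Euc n))) := by
  have hi := integrable_line hg hR x θ
  rw [integral_add hi.integrableOn (hi.comp_neg.integrableOn)]
  rw [integral_comp_neg_Ioi (f := fun s : ℝ => g (x + s • (θ : Euc n))), neg_zero, add_comm,
    intervalIntegral.integral_Iic_add_Ioi hi.integrableOn hi.integrableOn, Xray]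

/-- The potential converges to half the normal operator on the boundary of the half space. -/
lemma tendsto_potential (hn : 1 ≤ n) (hg : Continuous g) {B : ℝ} (hB : ∀ y, |g y| ≤ B)
    {R : ℝ} (hR0 : 0 ≤ R) (hR : Function.support g ⊆ closedBall 0 R) (x : Euc n) :
    Tendsto (fun t => potential g x t) (𝓝[>] 0) (𝓝 (normalOp g x / 2)) := by
  have : IsFiniteMeasure (sphereMeasure n) := by unfold sphereMeasure; infer_instance
  have hB0 : 0 ≤ B := (abs_nonneg _).trans (hB 0)
  set L := R + ‖x‖ with hL
  have hL0 : 0 ≤ L := by positivity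
  let κ : ℝ → ℝ → ℝ := fun t s => s ^ (n - 1) * (t ^ 2 + s ^ 2) ^ (-kerExp n)
  let J : sphere (0 : Euc n) 1 → ℝ → ℝ := fun θ s =>
    g (x + s • (θ : Euc n)) + g (x + (-s) • (θ : Euc n))
  have hκ0 : ∀ t s, 0 < s → 0 ≤ κ t s := fun t s hs => by positivity
  have hJb : ∀ θ s, |J θ s| ≤ 2 * B := fun θ s => by
    refine (abs_add_le _ _).trans ?_
    linarith [hB (x + s • (θ : Euc n)), hB (x + (-s) • (θ : Euc n))]
  have hJ0 : ∀ θ s, L < s → J θ s = 0 := fun θ s hs => by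
    have hs' : 0 ≤ s := hL0.trans hs.le
    simp only [J]
    rw [apply_add_smul_eq_zero hR x θ (by rwa [abs_of_nonneg hs']),
      apply_add_smul_eq_zero hR x θ (by rwa [abs_neg, abs_of_nonneg hs']), add_zero]
  have hbd : ∀ t, ∀ θ, ∀ s ∈ Ioi (0 : ℝ),
      ‖κ t s * J θ s‖ ≤ (Ioc 0 L).indicator (fun _ => 2 * B) s := by
    intro t θ s hs
    by_cases h : s ≤ L
    · rw [indicator_of_mem (show s ∈ Ioc 0 L from ⟨hs, h⟩), norm_mul, norm_eq_abs, norm_eq_abs,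
        abs_of_nonneg (hκ0 t s hs)]
      exact (mul_le_of_le_one_left (abs_nonneg _) (pow_mul_rpow_le_one hn hs)).trans (hJb θ s)
    · rw [hJ0 θ s (not_le.1 h)]
      simp only [mul_zero, norm_zero]
      exact indicator_nonneg (fun _ _ => by positivity) _
  have hbi : Integrable ((Ioc 0 L).indicator (fun _ => 2 * B)) (volume.restrict (Ioi (0 : ℝ))) := by
    rw [integrable_indicator_iff measurableSet_Ioc]
    exact (integrableOn_const (by simp)).mono_measure Measure.restrict_le_self
  have hJc : Continuous fun p : sphere (0 : Euc n) 1 × ℝ => J p.1 p.2 := by fun_prop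
  have hκm : ∀ t, Measurable (κ t) := fun t => by fun_prop
  have hlim : Tendsto (fun t => ∫ θ, (∫ s in Ioi (0 : ℝ), κ t s * J θ s) ∂(sphereMeasure n))
      (𝓝[>] 0)
      (𝓝 (∫ θ, (∫ s in Ioi (0 : ℝ), J θ s) ∂(sphereMeasure n))) := by
    refine tendsto_integral_filter_of_dominated_convergence
      (fun _ => ∫ s in Ioi (0 : ℝ), (Ioc 0 L).indicator (fun _ => 2 * B) s) ?_ ?_ ?_ ?_
    · refine .of_forall fun t => StronglyMeasurable.aestronglyMeasurable ?_
      refine StronglyMeasurable.integral_prod_right'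
        (f := fun p : sphere (0 : Euc n) 1 × ℝ => κ t p.2 * J p.1 p.2) ?_
      exact (((hκm t).comp measurable_snd).mul hJc.measurable).stronglyMeasurable
    · refine .of_forall fun t => .of_forall fun θ => ?_
      refine norm_integral_le_of_norm_le hbi ?_
      exact (ae_restrict_mem measurableSet_Ioi).mono fun s hs => hbd t θ s hs
    · exact integrable_const _
    · refine .of_forall fun θ => ?_
      refine tendsto_integral_filter_of_dominated_convergence _ ?_ ?_ hbi ?_
      · refine .of_forall fun t => ((hκm t).mul ?_).aestronglyMeasurable
        exact (hJc.comp (by fun_prop : Continuous fun s : ℝ => (θ, s))).measurable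
      · refine .of_forall fun t => ?_
        exact (ae_restrict_mem measurableSet_Ioi).mono fun s hs => hbd t θ s hs
      · refine (ae_restrict_mem measurableSet_Ioi).mono fun s hs => ?_
        simpa using (tendsto_pow_mul_rpow hn hs).mul_const (J θ s)
  have hN : normalOp g x = ∫ θ, (∫ s in Ioi (0 : ℝ), J θ s) ∂(sphereMeasure n) :=
    integral_congr_ae (.of_forall fun θ => xray_eq_integral_Ioi hg hR x θ)
  rw [hN]
  refine (hlim.div_const 2).congr' ?_
  filter_upwards [self_mem_nhdsWithin] with t ht
  rw [← two_mul_potential_eq hn hg hR x ht]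
  ring

end PotentialLimit

section Convolution

variable {n : ℕ} {F : Type*} [NormedAddCommGroup F] [NormedSpace ℝ F]

/-- The convolution of `g` with the kernel `Φ` in the horizontal variable. -/
noncomputable def conv (g : Euc n → ℝ) (Φ : Euc n → ℝ → F) (x : Euc n) (t : ℝ) : F :=
  ∫ y, g y • Φ (x - y) t

variable {g : Euc n → ℝ} {Φ : Euc n → ℝ → F}

lemma integrable_smul_comp_sub (hg : Continuous g) (hgc : HasCompactSupport g) {φ : Euc n → F}
    (hφ : Continuous φ) (x : Euc n) : Integrable fun y => g y • φ (x - y) :=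
  Continuous.integrable_of_hasCompactSupport (by fun_prop) hgc.smul_right

lemma continuous_conv (hg : Continuous g) (hgc : HasCompactSupport g) {t : ℝ}
    (hΦ : Continuous (Φ · t)) : Continuous (conv g Φ · t) := by
  have h1 : (conv g Φ · t) = fun x => ∫ y in tsupport g, g y • Φ (x - y) t := by
    funext x
    refine (setIntegral_eq_integral_of_forall_compl_eq_zero fun y hy => ?_).symm
    rw [image_eq_zero_of_notMem_tsupport hy, zero_smul]
  rw [h1]
  refine continuous_parametric_integral_of_continuous (f := fun x y => g y • Φ (x - y) t) ?_ hgc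
  have : Continuous fun p : Euc n × Euc n => Φ (p.1 - p.2) t :=
    hΦ.comp (continuous_fst.sub continuous_snd)
  exact (hg.comp continuous_snd).smul this

/-- Differentiation of a convolution in the horizontal variable. -/
lemma hasFDerivAt_conv (hg : Continuous g) (hgc : HasCompactSupport g) {t : ℝ}
    {Φ' : Euc n → ℝ → Euc n →L[ℝ] F} (hΦ : ∀ z, HasFDerivAt (Φ · t) (Φ' z t) z)
    (hΦ' : Continuous (Φ' · t)) (x : Euc n) :
    HasFDerivAt (conv g Φ · t) (conv g Φ' x t) x := by
  have hc : Continuous (Φ · t) := continuous_iff_continuousAt.2 fun z => (hΦ z).continuousAt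
  have hcomp : IsCompact (closedBall x 1 ×ˢ tsupport g) := (isCompact_closedBall _ _).prod hgc
  obtain ⟨C, hC⟩ := hcomp.exists_bound_of_continuousOn
    (f := fun p : Euc n × Euc n => Φ' (p.1 - p.2) t)
    (hΦ'.comp (continuous_fst.sub continuous_snd)).continuousOn
  refine hasFDerivAt_integral_of_dominated_of_fderiv_le (𝕜 := ℝ)
    (F := fun x y => g y • Φ (x - y) t)
    (F' := fun x y => g y • Φ' (x - y) t) (bound := fun y => ‖g y‖ * C)
    (ball_mem_nhds x one_pos) ?_ ?_ ?_ ?_ ?_ ?_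
  · exact .of_forall fun z => (integrable_smul_comp_sub hg hgc hc z).aestronglyMeasurable
  · exact integrable_smul_comp_sub hg hgc hc x
  · exact (integrable_smul_comp_sub hg hgc hΦ' x).aestronglyMeasurable
  · refine .of_forall fun y z hz => ?_
    by_cases hy : y ∈ tsupport g
    · rw [norm_smul]
      exact mul_le_mul_of_nonneg_left (hC (z, y) ⟨ball_subset_closedBall hz, hy⟩) (norm_nonneg _)
    · simp [image_eq_zero_of_notMem_tsupport hy]
  · exact (hg.norm.integrable_of_hasCompactSupport hgc.norm).mul_const C
  · exact .of_forall fun y z _ =>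
      ((hΦ (z - y)).comp z ((hasFDerivAt_id z).sub_const y)).const_smul (g y)

/-- Differentiation of a convolution in the vertical variable. -/
lemma hasDerivAt_conv (hg : Continuous g) (hgc : HasCompactSupport g) {Φ' : Euc n → ℝ → F}
    (hΦ : ∀ z t, 0 < t → HasDerivAt (Φ z) (Φ' z t) t) (hc : ∀ t, 0 < t → Continuous (Φ · t))
    (hΦ' : ContinuousOn (fun p : Euc n × ℝ => Φ' p.1 p.2) (univ ×ˢ Ioi 0)) (x : Euc n) {t : ℝ}
    (ht : 0 < t) : HasDerivAt (conv g Φ x) (conv g Φ' x t) t := by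
  have hc' : Continuous (Φ' · t) := by
    rw [← continuousOn_univ]
    exact hΦ'.comp (f := fun z : Euc n => (z, t))
      (by fun_prop : Continuous fun z : Euc n => (z, t)).continuousOn fun z _ => ⟨mem_univ _, ht⟩
  have hcomp : IsCompact (tsupport g ×ˢ Icc (t / 2) (2 * t)) := IsCompact.prod hgc isCompact_Icc
  obtain ⟨C, hC⟩ := hcomp.exists_bound_of_continuousOn
    (f := fun p : Euc n × ℝ => Φ' (x - p.1) p.2)
    (hΦ'.comp (by fun_prop : Continuous fun p : Euc n × ℝ => (x - p.1, p.2)).continuousOn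
      fun p hp => ⟨mem_univ _, by have := hp.2.1; simp only [mem_Ioi]; linarith⟩)
  refine (hasDerivAt_integral_of_dominated_loc_of_deriv_le (𝕜 := ℝ)
    (F := fun t y => g y • Φ (x - y) t)
    (F' := fun t y => g y • Φ' (x - y) t) (bound := fun y => ‖g y‖ * C)
    (Icc_mem_nhds (by linarith) (by linarith) : Icc (t / 2) (2 * t) ∈ 𝓝 t) ?_ ?_ ?_ ?_ ?_ ?_).2
  · filter_upwards [lt_mem_nhds ht] with s hs
    exact (integrable_smul_comp_sub hg hgc (hc s hs) x).aestronglyMeasurable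
  · exact integrable_smul_comp_sub hg hgc (hc t ht) x
  · exact (integrable_smul_comp_sub hg hgc hc' x).aestronglyMeasurable
  · refine .of_forall fun y s hs => ?_
    by_cases hy : y ∈ tsupport g
    · rw [norm_smul]
      exact mul_le_mul_of_nonneg_left (hC (y, s) ⟨hy, hs⟩) (norm_nonneg _)
    · simp [image_eq_zero_of_notMem_tsupport hy]
  · exact (hg.norm.integrable_of_hasCompactSupport hgc.norm).mul_const C
  · exact .of_forall fun y s hs => (hΦ (x - y) s (by linarith [hs.1])).const_smul (g y)

lemma norm_conv_le {B R A : ℝ} (hB : ∀ y, |g y| ≤ B)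
    (hR : Function.support g ⊆ closedBall 0 R) {x : Euc n} {t : ℝ}
    (hΦ : ∀ y ∈ closedBall (0 : Euc n) R, ‖Φ (x - y) t‖ ≤ A) :
    ‖conv g Φ x t‖ ≤ B * (volume : Measure (Euc n)).real (closedBall 0 R) * A := by
  have hB0 : 0 ≤ B := (abs_nonneg _).trans (hB 0)
  have h1 : conv g Φ x t = ∫ y in closedBall 0 R, g y • Φ (x - y) t := by
    refine (setIntegral_eq_integral_of_forall_compl_eq_zero fun y hy => ?_).symm
    rw [Function.notMem_support.1 fun h => hy (hR h), zero_smul]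
  rw [h1]
  refine (norm_setIntegral_le_of_norm_le_const (C := B * A) measure_closedBall_lt_top
    fun y hy => ?_).trans (le_of_eq (by ring))
  rw [norm_smul]
  exact mul_le_mul (hB y) (hΦ y hy) (norm_nonneg _) hB0

end Convolution

section Kernel

variable {n : ℕ}

/-- The Newtonian kernel of `ℝⁿ × ℝ`, up to a constant. -/
noncomputable def newtonKer (x : Euc n) (t : ℝ) : ℝ := quad x t ^ (-kerExp n)

/-- The vertical derivative of `newtonKer`. -/
noncomputable def kerT (x : Euc n) (t : ℝ) : ℝ :=
  -(2 * kerExp n) * (t * quad x t ^ (-kerExp n - 1))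

/-- The horizontal gradient of `newtonKer`. -/
noncomputable def kerGrad (x : Euc n) (t : ℝ) : Euc n :=
  (-(2 * kerExp n) * quad x t ^ (-kerExp n - 1)) • x

/-- The second vertical derivative of `newtonKer`. -/
noncomputable def kerTT (x : Euc n) (t : ℝ) : ℝ :=
  -(2 * kerExp n) * quad x t ^ (-kerExp n - 1) +
    4 * kerExp n * (kerExp n + 1) * (t ^ 2 * quad x t ^ (-kerExp n - 2))

/-- The horizontal gradient of `kerT`. -/
noncomputable def kerGradT (x : Euc n) (t : ℝ) : Euc n :=
  (4 * kerExp n * (kerExp n + 1) * (t * quad x t ^ (-kerExp n - 2))) • x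

/-- The horizontal Hessian of `newtonKer`. -/
noncomputable def kerHess (x : Euc n) (t : ℝ) : Euc n →L[ℝ] Euc n :=
  (-(2 * kerExp n) * quad x t ^ (-kerExp n - 1)) • ContinuousLinearMap.id ℝ (Euc n) +
    (4 * kerExp n * (kerExp n + 1) * quad x t ^ (-kerExp n - 2)) •
      (innerSL ℝ x).smulRight x

lemma hasFDerivAt_quad_rpow (c : ℝ) (x : Euc n) {t : ℝ} (ht : 0 < t) :
    HasFDerivAt (fun x : Euc n => quad x t ^ c) ((2 * c * quad x t ^ (c - 1)) • innerSL ℝ x) x := by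
  have h1 : HasFDerivAt (fun x : Euc n => quad x t) ((2 : ℝ) • innerSL ℝ x) x := by
    unfold quad
    refine ((hasStrictFDerivAt_norm_sq x).hasFDerivAt.const_add (t ^ 2)).congr_fderiv ?_
    ext v; simp
  have h2 := h1.rpow_const (p := c) (.inl (quad_pos x ht).ne')
  refine h2.congr_fderiv ?_
  rw [smul_smul]; ring_nf

lemma hasDerivAt_quad_rpow (c : ℝ) (x : Euc n) {t : ℝ} (ht : 0 < t) :
    HasDerivAt (fun t : ℝ => quad x t ^ c) (2 * c * (t * quad x t ^ (c - 1))) t := by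
  have h1 : HasDerivAt (fun t : ℝ => quad x t) (2 * t) t := by
    unfold quad
    simpa using (hasDerivAt_pow 2 t).add_const (‖x‖ ^ 2)
  exact (h1.rpow_const (p := c) (.inl (quad_pos x ht).ne')).congr_deriv (by ring)

lemma hasFDerivAt_newtonKer (x : Euc n) {t : ℝ} (ht : 0 < t) :
    HasFDerivAt (newtonKer · t) (innerSL ℝ (kerGrad x t)) x := by
  refine (hasFDerivAt_quad_rpow (-kerExp n) x ht).congr_fderiv ?_
  rw [kerGrad, map_smul]; ring_nf

lemma hasDerivAt_newtonKer (x : Euc n) {t : ℝ} (ht : 0 < t) :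
    HasDerivAt (newtonKer x) (kerT x t) t := by
  refine (hasDerivAt_quad_rpow (-kerExp n) x ht).congr_deriv ?_
  rw [kerT]; ring

lemma hasDerivAt_kerT (x : Euc n) {t : ℝ} (ht : 0 < t) : HasDerivAt (kerT x) (kerTT x t) t := by
  have h := ((hasDerivAt_id t).mul (hasDerivAt_quad_rpow (-kerExp n - 1) x ht)).const_mul
    (-(2 * kerExp n))
  refine h.congr_deriv ?_
  rw [kerTT]
  simp only [id]
  rw [show -kerExp n - 1 - 1 = -kerExp n - 2 by ring]
  ring

lemma hasFDerivAt_kerT (x : Euc n) {t : ℝ} (ht : 0 < t) :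
    HasFDerivAt (kerT · t) (innerSL ℝ (kerGradT x t)) x := by
  have h := ((hasFDerivAt_quad_rpow (-kerExp n - 1) x ht).const_mul t).const_mul
    (-(2 * kerExp n))
  refine h.congr_fderiv ?_
  rw [kerGradT, map_smul, smul_smul, smul_smul, show -kerExp n - 1 - 1 = -kerExp n - 2 by ring]
  congr 1; ring

lemma hasDerivAt_kerGrad (x : Euc n) {t : ℝ} (ht : 0 < t) :
    HasDerivAt (kerGrad x) (kerGradT x t) t := by
  have h := ((hasDerivAt_quad_rpow (-kerExp n - 1) x ht).const_mul
    (-(2 * kerExp n))).smul_const x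
  refine h.congr_deriv ?_
  rw [kerGradT, show -kerExp n - 1 - 1 = -kerExp n - 2 by ring]
  congr 1; ring

lemma hasFDerivAt_kerGrad (x : Euc n) {t : ℝ} (ht : 0 < t) :
    HasFDerivAt (kerGrad · t) (kerHess x t) x := by
  have h := ((hasFDerivAt_quad_rpow (-kerExp n - 1) x ht).const_mul
    (-(2 * kerExp n))).smul (hasFDerivAt_id x)
  refine h.congr_fderiv ?_
  rw [kerHess, show -kerExp n - 1 - 1 = -kerExp n - 2 by ring]
  congr 1
  ext v : 1
  simp [smul_smul]
  module

lemma continuousOn_quad_rpow (c : ℝ) :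
    ContinuousOn (fun p : Euc n × ℝ => quad p.1 p.2 ^ c) (univ ×ˢ Ioi 0) :=
  continuous_quad.continuousOn.rpow_const fun p hp => .inl (quad_pos p.1 hp.2).ne'

lemma continuousOn_kerT :
    ContinuousOn (fun p : Euc n × ℝ => kerT p.1 p.2) (univ ×ˢ Ioi 0) := by
  unfold kerT
  exact continuousOn_const.mul (continuousOn_snd.mul (continuousOn_quad_rpow _))

lemma continuousOn_kerTT :
    ContinuousOn (fun p : Euc n × ℝ => kerTT p.1 p.2) (univ ×ˢ Ioi 0) := by
  unfold kerTT
  exact (continuousOn_const.mul (continuousOn_quad_rpow _)).add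
    (continuousOn_const.mul ((continuousOn_snd.pow 2).mul (continuousOn_quad_rpow _)))

lemma continuousOn_kerGradT :
    ContinuousOn (fun p : Euc n × ℝ => kerGradT p.1 p.2) (univ ×ˢ Ioi 0) := by
  unfold kerGradT
  exact (continuousOn_const.mul (continuousOn_snd.mul (continuousOn_quad_rpow _))).smul
    continuousOn_fst

lemma continuous_kerHess {t : ℝ} (ht : 0 < t) : Continuous (kerHess (n := n) · t) := by
  have h1 := continuous_quad_rpow (n := n) (-kerExp n - 1) ht
  have h2 := continuous_quad_rpow (n := n) (-kerExp n - 2) ht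
  have h3 : Continuous fun x : Euc n => (innerSL ℝ x).smulRight x :=
    ((ContinuousLinearMap.smulRightL ℝ (Euc n) (Euc n)).continuous₂).comp
      ((innerSL ℝ).continuous.prodMk continuous_id)
  unfold kerHess
  fun_prop

lemma continuous_of_continuousOn_prod {F : Type*} [TopologicalSpace F] {Φ : Euc n → ℝ → F}
    (h : ContinuousOn (fun p : Euc n × ℝ => Φ p.1 p.2) (univ ×ˢ Ioi 0)) {t : ℝ} (ht : 0 < t) :
    Continuous (Φ · t) := by
  rw [← continuousOn_univ]
  exact h.comp (f := fun z : Euc n => (z, t))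
    (by fun_prop : Continuous fun z : Euc n => (z, t)).continuousOn fun z _ => ⟨mem_univ _, ht⟩

lemma continuous_newtonKer {t : ℝ} (ht : 0 < t) : Continuous (newtonKer (n := n) · t) :=
  continuous_quad_rpow _ ht

lemma continuous_kerGrad {t : ℝ} (ht : 0 < t) : Continuous (kerGrad (n := n) · t) :=
  continuous_iff_continuousAt.2 fun x => (hasFDerivAt_kerGrad x ht).continuousAt

/-- The kernel is harmonic in `ℝⁿ × (0, ∞)`. -/
lemma kerTT_eq_neg_trace (x : Euc n) {t : ℝ} (ht : 0 < t) :
    kerTT x t = -∑ i, (kerHess x t (EuclideanSpace.single i 1)) i := by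
  have h1 : quad x t ^ (-kerExp n - 1) = quad x t * quad x t ^ (-kerExp n - 2) := by
    rw [show -kerExp n - 1 = 1 + (-kerExp n - 2) by ring, rpow_add (quad_pos x ht), rpow_one]
  have h2 : ∀ i : Fin n, (kerHess x t (EuclideanSpace.single i 1)) i =
      -(2 * kerExp n) * quad x t ^ (-kerExp n - 1) +
      4 * kerExp n * (kerExp n + 1) * quad x t ^ (-kerExp n - 2) * x i ^ 2 := by
    intro i
    simp only [kerHess, add_apply, smul_apply,
      ContinuousLinearMap.id_apply, ContinuousLinearMap.smulRight_apply, innerSL_apply_apply,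
      EuclideanSpace.inner_single_right, PiLp.add_apply, PiLp.smul_apply, smul_eq_mul,
      PiLp.single_apply, if_true, one_mul, conj_trivial]
    ring
  simp only [h2, Finset.sum_add_distrib, ← Finset.mul_sum, ← EuclideanSpace.real_norm_sq_eq]
  simp only [Finset.sum_const, Finset.card_univ, Fintype.card_fin, nsmul_eq_mul, kerTT]
  have h3 : t ^ 2 = quad x t - ‖x‖ ^ 2 := by simp [quad]
  have hn : (n : ℝ) = 2 * kerExp n + 1 := by unfold kerExp; ring
  rw [h3, hn, h1]
  ring

section Bounds

lemma sqrt_quad_inv_pow (x : Euc n) {t : ℝ} (ht : 0 < t) (k : ℕ) :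
    (√(quad x t))⁻¹ ^ k = quad x t ^ (-((k : ℝ) / 2)) := by
  rw [sqrt_eq_rpow, ← rpow_neg (quad_pos x ht).le, ← rpow_natCast, ← rpow_mul (quad_pos x ht).le]
  congr 1; ring

lemma le_sqrt_quad_left (x : Euc n) (t : ℝ) : t ≤ √(quad x t) :=
  le_sqrt_of_sq_le (by unfold quad; nlinarith [sq_nonneg ‖x‖])

lemma le_sqrt_quad_right (x : Euc n) (t : ℝ) : ‖x‖ ≤ √(quad x t) :=
  le_sqrt_of_sq_le (by unfold quad; nlinarith [sq_nonneg t])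

lemma kerExp_nonneg (hn : 1 ≤ n) : 0 ≤ kerExp n := by
  unfold kerExp
  have : (1 : ℝ) ≤ n := by exact_mod_cast hn
  linarith

/-- A constant bounding the derivatives of order at most two of `newtonKer`. -/
noncomputable def kerConst (n : ℕ) : ℝ := 1 + 2 * kerExp n + 4 * kerExp n * (kerExp n + 1)

lemma kerConst_pos (hn : 1 ≤ n) : 0 < kerConst n := by
  have := kerExp_nonneg hn
  unfold kerConst; positivity

lemma abs_newtonKer_le (hn : 1 ≤ n) (x : Euc n) {t : ℝ} (ht : 0 < t) :
    |newtonKer x t| ≤ kerConst n * (√(quad x t))⁻¹ ^ (n - 1) := by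
  have := kerExp_nonneg hn
  have h : newtonKer x t = (√(quad x t))⁻¹ ^ (n - 1) := by
    rw [sqrt_quad_inv_pow x ht, newtonKer, kerExp]; push_cast [hn]; rfl
  rw [h, abs_of_nonneg (by positivity)]
  exact le_mul_of_one_le_left (by positivity) (by unfold kerConst; nlinarith)

lemma quad_rpow_sub_one (x : Euc n) {t : ℝ} (ht : 0 < t) :
    quad x t ^ (-kerExp n - 1) = (√(quad x t))⁻¹ ^ (n + 1) := by
  rw [sqrt_quad_inv_pow x ht, kerExp]; congr 1; push_cast; ring

lemma quad_rpow_sub_two (x : Euc n) {t : ℝ} (ht : 0 < t) :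
    quad x t ^ (-kerExp n - 2) = (√(quad x t))⁻¹ ^ (n + 3) := by
  rw [sqrt_quad_inv_pow x ht, kerExp]; congr 1; push_cast; ring

lemma abs_kerT_le (hn : 1 ≤ n) (x : Euc n) {t : ℝ} (ht : 0 < t) :
    |kerT x t| ≤ kerConst n * (√(quad x t))⁻¹ ^ n := by
  have hb := kerExp_nonneg hn
  have hr : 0 < √(quad x t) := sqrt_pos.2 (quad_pos x ht)
  rw [kerT, quad_rpow_sub_one x ht, abs_mul, abs_neg, abs_of_nonneg (by positivity),
    abs_of_nonneg (by positivity), pow_succ]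
  have h1 : t * (√(quad x t))⁻¹ ≤ 1 := by
    rw [mul_inv_le_iff₀ hr, one_mul]; exact le_sqrt_quad_left x t
  calc 2 * kerExp n * (t * ((√(quad x t))⁻¹ ^ n * (√(quad x t))⁻¹))
      = (2 * kerExp n * (√(quad x t))⁻¹ ^ n) * (t * (√(quad x t))⁻¹) := by ring
    _ ≤ (2 * kerExp n * (√(quad x t))⁻¹ ^ n) := mul_le_of_le_one_right (by positivity) h1
    _ ≤ _ := by gcongr; unfold kerConst; nlinarith

lemma norm_kerGrad_le (hn : 1 ≤ n) (x : Euc n) {t : ℝ} (ht : 0 < t) :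
    ‖kerGrad x t‖ ≤ kerConst n * (√(quad x t))⁻¹ ^ n := by
  have hb := kerExp_nonneg hn
  have hr : 0 < √(quad x t) := sqrt_pos.2 (quad_pos x ht)
  rw [kerGrad, quad_rpow_sub_one x ht, norm_smul, norm_mul, norm_neg, norm_eq_abs, norm_eq_abs,
    abs_of_nonneg (by positivity), abs_of_nonneg (by positivity), pow_succ]
  have h1 : ‖x‖ * (√(quad x t))⁻¹ ≤ 1 := by
    rw [mul_inv_le_iff₀ hr, one_mul]; exact le_sqrt_quad_right x t
  calc 2 * kerExp n * ((√(quad x t))⁻¹ ^ n * (√(quad x t))⁻¹) * ‖x‖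
      = (2 * kerExp n * (√(quad x t))⁻¹ ^ n) * (‖x‖ * (√(quad x t))⁻¹) := by ring
    _ ≤ (2 * kerExp n * (√(quad x t))⁻¹ ^ n) := mul_le_of_le_one_right (by positivity) h1
    _ ≤ _ := by gcongr; unfold kerConst; nlinarith

lemma norm_kerGradT_le (hn : 1 ≤ n) (x : Euc n) {t : ℝ} (ht : 0 < t) :
    ‖kerGradT x t‖ ≤ kerConst n * (√(quad x t))⁻¹ ^ (n + 1) := by
  have hb := kerExp_nonneg hn
  have hr : 0 < √(quad x t) := sqrt_pos.2 (quad_pos x ht)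
  rw [kerGradT, quad_rpow_sub_two x ht, norm_smul, norm_eq_abs, abs_of_nonneg (by positivity)]
  have h1 : ‖x‖ * (√(quad x t))⁻¹ ≤ 1 := by
    rw [mul_inv_le_iff₀ hr, one_mul]; exact le_sqrt_quad_right x t
  have h2 : t * (√(quad x t))⁻¹ ≤ 1 := by
    rw [mul_inv_le_iff₀ hr, one_mul]; exact le_sqrt_quad_left x t
  calc 4 * kerExp n * (kerExp n + 1) * (t * (√(quad x t))⁻¹ ^ (n + 3)) * ‖x‖
      = (4 * kerExp n * (kerExp n + 1) * (√(quad x t))⁻¹ ^ (n + 1)) *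
        ((t * (√(quad x t))⁻¹) * (‖x‖ * (√(quad x t))⁻¹)) := by ring
    _ ≤ 4 * kerExp n * (kerExp n + 1) * (√(quad x t))⁻¹ ^ (n + 1) :=
        mul_le_of_le_one_right (by positivity) (mul_le_one₀ h2 (by positivity) h1)
    _ ≤ _ := by gcongr; unfold kerConst; nlinarith

lemma abs_kerTT_le (hn : 1 ≤ n) (x : Euc n) {t : ℝ} (ht : 0 < t) :
    |kerTT x t| ≤ kerConst n * (√(quad x t))⁻¹ ^ (n + 1) := by
  have hb := kerExp_nonneg hn
  have hr : 0 < √(quad x t) := sqrt_pos.2 (quad_pos x ht)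
  have h2 : t * (√(quad x t))⁻¹ ≤ 1 := by
    rw [mul_inv_le_iff₀ hr, one_mul]; exact le_sqrt_quad_left x t
  rw [kerTT, quad_rpow_sub_two x ht, quad_rpow_sub_one x ht]
  refine (abs_add_le _ _).trans ?_
  rw [abs_mul, abs_neg, abs_of_nonneg (by positivity), abs_of_nonneg (by positivity),
    abs_of_nonneg (by positivity)]
  have h3 : 4 * kerExp n * (kerExp n + 1) * (t ^ 2 * (√(quad x t))⁻¹ ^ (n + 3))
      ≤ 4 * kerExp n * (kerExp n + 1) * (√(quad x t))⁻¹ ^ (n + 1) := by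
    calc _ = (4 * kerExp n * (kerExp n + 1) * (√(quad x t))⁻¹ ^ (n + 1)) *
        ((t * (√(quad x t))⁻¹) * (t * (√(quad x t))⁻¹)) := by ring
      _ ≤ _ := mul_le_of_le_one_right (by positivity) (mul_le_one₀ h2 (by positivity) h2)
  have h4 : 0 ≤ (√(quad x t))⁻¹ ^ (n + 1) := by positivity
  unfold kerConst
  nlinarith

lemma norm_kerHess_le (hn : 1 ≤ n) (x : Euc n) {t : ℝ} (ht : 0 < t) :
    ‖kerHess x t‖ ≤ kerConst n * (√(quad x t))⁻¹ ^ (n + 1) := by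
  have hb := kerExp_nonneg hn
  have hr : 0 < √(quad x t) := sqrt_pos.2 (quad_pos x ht)
  have h2 : ‖x‖ * (√(quad x t))⁻¹ ≤ 1 := by
    rw [mul_inv_le_iff₀ hr, one_mul]; exact le_sqrt_quad_right x t
  rw [kerHess, quad_rpow_sub_two x ht, quad_rpow_sub_one x ht]
  refine (norm_add_le _ _).trans ?_
  rw [norm_smul, norm_smul, norm_mul, norm_neg, ContinuousLinearMap.norm_smulRight_apply,
    innerSL_apply_norm, norm_of_nonneg (by positivity), norm_of_nonneg (by positivity),
    norm_of_nonneg (by positivity)]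
  have h3 : 4 * kerExp n * (kerExp n + 1) * (√(quad x t))⁻¹ ^ (n + 3) * (‖x‖ * ‖x‖)
      ≤ 4 * kerExp n * (kerExp n + 1) * (√(quad x t))⁻¹ ^ (n + 1) := by
    calc _ = (4 * kerExp n * (kerExp n + 1) * (√(quad x t))⁻¹ ^ (n + 1)) *
        ((‖x‖ * (√(quad x t))⁻¹) * (‖x‖ * (√(quad x t))⁻¹)) := by ring
      _ ≤ _ := mul_le_of_le_one_right (by positivity) (mul_le_one₀ h2 (by positivity) h2)
  have h4 : 0 ≤ (√(quad x t))⁻¹ ^ (n + 1) := by positivity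
  have h5 : 2 * kerExp n * (√(quad x t))⁻¹ ^ (n + 1) * ‖ContinuousLinearMap.id ℝ (Euc n)‖ ≤
      2 * kerExp n * (√(quad x t))⁻¹ ^ (n + 1) :=
    mul_le_of_le_one_right (by positivity) ContinuousLinearMap.norm_id_le
  unfold kerConst
  nlinarith

end Bounds

end Kernel

section Decay

variable {n : ℕ}

/-- The weight `(1 + ‖x‖)⁻¹`. -/
noncomputable def weight (x : Euc n) : ℝ := (1 + ‖x‖)⁻¹

lemma weight_pos (x : Euc n) : 0 < weight x := by unfold weight; positivity

lemma weight_le_one (x : Euc n) : weight x ≤ 1 :=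
  inv_le_one_of_one_le₀ (by linarith [norm_nonneg x])

lemma integrable_weight_pow : Integrable fun x : Euc n => weight x ^ (n + 1) := by
  have h := integrable_one_add_norm (E := Euc n) (μ := volume) (r := n + 1) (by simp)
  refine h.congr (.of_forall fun x => ?_)
  simp only [weight]
  rw [rpow_neg (by positivity), inv_pow, ← Nat.cast_add_one, rpow_natCast]

lemma weight_pow_le (hn : 1 ≤ n) (x : Euc n) : weight x ^ n ≤ weight x :=
  pow_le_of_le_one (weight_pos x).le (weight_le_one x) (by lia)

/-- A function which is harmonic in the upper half space and which decays, with its derivatives of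
order at most two, away from the boundary. -/
structure DecayingHarmonic (n : ℕ) where
  /-- the function -/
  w : Euc n → ℝ → ℝ
  /-- its vertical derivative -/
  wt : Euc n → ℝ → ℝ
  /-- its second vertical derivative -/
  wtt : Euc n → ℝ → ℝ
  /-- its horizontal gradient -/
  gw : Euc n → ℝ → Euc n
  /-- the horizontal gradient of its vertical derivative -/
  gwt : Euc n → ℝ → Euc n
  /-- its horizontal Hessian -/
  hw : Euc n → ℝ → Euc n →L[ℝ] Euc n
  hasDerivAt_w : ∀ x {t}, 0 < t → HasDerivAt (w x) (wt x t) t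
  hasDerivAt_wt : ∀ x {t}, 0 < t → HasDerivAt (wt x) (wtt x t) t
  hasDerivAt_gw : ∀ x {t}, 0 < t → HasDerivAt (gw x) (gwt x t) t
  hasFDerivAt_w : ∀ x {t}, 0 < t → HasFDerivAt (w · t) (innerSL ℝ (gw x t)) x
  hasFDerivAt_wt : ∀ x {t}, 0 < t → HasFDerivAt (wt · t) (innerSL ℝ (gwt x t)) x
  hasFDerivAt_gw : ∀ x {t}, 0 < t → HasFDerivAt (gw · t) (hw x t) x
  harmonic : ∀ x {t}, 0 < t → wtt x t = -∑ i, (hw x t (EuclideanSpace.single i 1)) i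
  continuous_wtt : ∀ {t}, 0 < t → Continuous (wtt · t)
  continuous_gwt : ∀ {t}, 0 < t → Continuous (gwt · t)
  continuous_hw : ∀ {t}, 0 < t → Continuous (hw · t)
  bound : ∀ t₀ > 0, ∃ C, ∀ t ≥ t₀, ∀ x, |w x t| ≤ C * weight x ∧ |wt x t| ≤ C * weight x ^ n ∧
    |wtt x t| ≤ C * weight x ^ n ∧ ‖gw x t‖ ≤ C * weight x ^ n ∧ ‖gwt x t‖ ≤ C * weight x ^ n ∧
    ‖hw x t‖ ≤ C * weight x ^ n
  tendsto_wt : ∀ x, Tendsto (wt x) atTop (𝓝 0)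
  tendsto_gw : ∀ x, Tendsto (gw x) atTop (𝓝 0)

namespace DecayingHarmonic

/-- Vertical translation. -/
def shift (W : DecayingHarmonic n) (a : ℝ) (ha : 0 ≤ a) : DecayingHarmonic n where
  w x t := W.w x (t + a)
  wt x t := W.wt x (t + a)
  wtt x t := W.wtt x (t + a)
  gw x t := W.gw x (t + a)
  gwt x t := W.gwt x (t + a)
  hw x t := W.hw x (t + a)
  hasDerivAt_w x t ht := (W.hasDerivAt_w x (by linarith)).comp_add_const t a
  hasDerivAt_wt x t ht := (W.hasDerivAt_wt x (by linarith)).comp_add_const t a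
  hasDerivAt_gw x t ht := (W.hasDerivAt_gw x (by linarith)).comp_add_const t a
  hasFDerivAt_w x t ht := W.hasFDerivAt_w x (by linarith)
  hasFDerivAt_wt x t ht := W.hasFDerivAt_wt x (by linarith)
  hasFDerivAt_gw x t ht := W.hasFDerivAt_gw x (by linarith)
  harmonic x t ht := W.harmonic x (by linarith)
  continuous_wtt ht := W.continuous_wtt (by linarith)
  continuous_gwt ht := W.continuous_gwt (by linarith)
  continuous_hw ht := W.continuous_hw (by linarith)
  bound t₀ ht₀ := by
    obtain ⟨C, hC⟩ := W.bound t₀ ht₀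
    exact ⟨C, fun t ht x => hC (t + a) (by linarith) x⟩
  tendsto_wt x := (W.tendsto_wt x).comp (tendsto_atTop_add_const_right _ a tendsto_id)
  tendsto_gw x := (W.tendsto_gw x).comp (tendsto_atTop_add_const_right _ a tendsto_id)

/-- The difference of two functions. -/
def sub (W Z : DecayingHarmonic n) : DecayingHarmonic n where
  w x t := W.w x t - Z.w x t
  wt x t := W.wt x t - Z.wt x t
  wtt x t := W.wtt x t - Z.wtt x t
  gw x t := W.gw x t - Z.gw x t
  gwt x t := W.gwt x t - Z.gwt x t
  hw x t := W.hw x t - Z.hw x t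
  hasDerivAt_w x t ht := (W.hasDerivAt_w x ht).sub (Z.hasDerivAt_w x ht)
  hasDerivAt_wt x t ht := (W.hasDerivAt_wt x ht).sub (Z.hasDerivAt_wt x ht)
  hasDerivAt_gw x t ht := (W.hasDerivAt_gw x ht).sub (Z.hasDerivAt_gw x ht)
  hasFDerivAt_w x t ht :=
    ((W.hasFDerivAt_w x ht).sub (Z.hasFDerivAt_w x ht)).congr_fderiv (map_sub _ _ _).symm
  hasFDerivAt_wt x t ht :=
    ((W.hasFDerivAt_wt x ht).sub (Z.hasFDerivAt_wt x ht)).congr_fderiv (map_sub _ _ _).symm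
  hasFDerivAt_gw x t ht := (W.hasFDerivAt_gw x ht).sub (Z.hasFDerivAt_gw x ht)
  harmonic x t ht := by
    rw [W.harmonic x ht, Z.harmonic x ht]
    simp only [sub_apply, PiLp.sub_apply, Finset.sum_sub_distrib]
    ring
  continuous_wtt ht := (W.continuous_wtt ht).sub (Z.continuous_wtt ht)
  continuous_gwt ht := (W.continuous_gwt ht).sub (Z.continuous_gwt ht)
  continuous_hw ht := (W.continuous_hw ht).sub (Z.continuous_hw ht)
  bound t₀ ht₀ := by
    obtain ⟨C, hC⟩ := W.bound t₀ ht₀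
    obtain ⟨D, hD⟩ := Z.bound t₀ ht₀
    refine ⟨C + D, fun t ht x => ?_⟩
    obtain ⟨h1, h2, h3, h4, h5, h6⟩ := hC t ht x
    obtain ⟨k1, k2, k3, k4, k5, k6⟩ := hD t ht x
    simp only [add_mul]
    exact ⟨(abs_sub _ _).trans (add_le_add h1 k1), (abs_sub _ _).trans (add_le_add h2 k2),
      (abs_sub _ _).trans (add_le_add h3 k3), (norm_sub_le _ _).trans (add_le_add h4 k4),
      (norm_sub_le _ _).trans (add_le_add h5 k5), (norm_sub_le _ _).trans (add_le_add h6 k6)⟩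
  tendsto_wt x := by simpa using (W.tendsto_wt x).sub (Z.tendsto_wt x)
  tendsto_gw x := by simpa using (W.tendsto_gw x).sub (Z.tendsto_gw x)

end DecayingHarmonic

/-- In the region `t₀ ≤ t` the kernels are controlled by the weight, uniformly for `y` in a
ball. -/
lemma inv_sqrt_quad_le_weight {R t₀ t : ℝ} (hR : 0 ≤ R) (ht₀ : 0 < t₀) (ht : t₀ ≤ t) (x : Euc n)
    {y : Euc n} (hy : y ∈ closedBall (0 : Euc n) R) :
    (√(quad (x - y) t))⁻¹ ≤ (1 + (1 + R) / t₀) * weight x := by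
  have ht' : 0 < t := by linarith
  have hr : 0 < √(quad (x - y) t) := sqrt_pos.2 (quad_pos _ ht')
  rw [mem_closedBall_zero_iff] at hy
  have h1 : 1 + ‖x‖ ≤ (1 + (1 + R) / t₀) * √(quad (x - y) t) := by
    have h2 : ‖x‖ ≤ ‖x - y‖ + R := by
      calc ‖x‖ = ‖(x - y) + y‖ := by simp
        _ ≤ _ := (norm_add_le _ _).trans (by linarith)
    have h3 := le_sqrt_quad_right (x - y) t
    have h4 : 1 + R ≤ (1 + R) / t₀ * √(quad (x - y) t) := by
      rw [div_mul_eq_mul_div, le_div_iff₀ ht₀]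
      exact mul_le_mul_of_nonneg_left (ht.trans (le_sqrt_quad_left _ _)) (by linarith)
    linarith
  rw [weight, ← div_eq_mul_inv, inv_le_comm₀ hr (by positivity), inv_div]
  rw [div_le_iff₀ (by positivity)]
  linarith

lemma innerSL_conv {g : Euc n → ℝ} {Φ : Euc n → ℝ → Euc n} (hg : Continuous g)
    (hgc : HasCompactSupport g) {t : ℝ} (hΦ : Continuous (Φ · t)) (x : Euc n) :
    innerSL ℝ (conv g Φ x t) = conv g (fun z s => innerSL ℝ (Φ z s)) x t := by
  unfold conv
  rw [← (innerSL ℝ (E := Euc n)).integral_comp_comm (integrable_smul_comp_sub hg hgc hΦ x)]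
  simp

lemma tendsto_conv_atTop {F : Type*} [NormedAddCommGroup F] [NormedSpace ℝ F] {g : Euc n → ℝ}
    {Φ : Euc n → ℝ → F} {B R D : ℝ} (hn : 1 ≤ n) (hB : ∀ y, |g y| ≤ B)
    (hR : Function.support g ⊆ closedBall 0 R)
    (hΦ : ∀ x {t}, 0 < t → ‖Φ x t‖ ≤ D * (√(quad x t))⁻¹ ^ n) (hD : 0 ≤ D) (x : Euc n) :
    Tendsto (conv g Φ x) atTop (𝓝 0) := by
  have h1 : Tendsto (fun t : ℝ => B * (volume : Measure (Euc n)).real (closedBall 0 R) *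
      (D * t⁻¹ ^ n)) atTop (𝓝 0) := by
    have : Tendsto (fun t : ℝ => t⁻¹ ^ n) atTop (𝓝 0) := by
      simpa [show n ≠ 0 by lia] using (tendsto_inv_atTop_zero (𝕜 := ℝ)).pow n
    simpa using (this.const_mul D).const_mul (B * (volume : Measure (Euc n)).real (closedBall 0 R))
  refine squeeze_zero_norm' ?_ h1
  filter_upwards [eventually_gt_atTop 0] with t ht
  refine norm_conv_le hB hR fun y _ => (hΦ _ ht).trans ?_
  gcongr
  exact le_sqrt_quad_left _ _

lemma norm_conv_le_weight {F : Type*} [NormedAddCommGroup F] [NormedSpace ℝ F] {g : Euc n → ℝ}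
    {Φ : Euc n → ℝ → F} {B R D : ℝ} {j k : ℕ} (hjk : j ≤ k) (hk : k ≤ n + 1)
    (hB : ∀ y, |g y| ≤ B) (hR0 : 0 ≤ R) (hR : Function.support g ⊆ closedBall 0 R) (hD : 0 ≤ D)
    (hΦ : ∀ x {t}, 0 < t → ‖Φ x t‖ ≤ D * (√(quad x t))⁻¹ ^ k) {t₀ t : ℝ} (ht₀ : 0 < t₀)
    (ht : t₀ ≤ t) (x : Euc n) :
    ‖conv g Φ x t‖ ≤ B * (volume : Measure (Euc n)).real (closedBall 0 R) *
      (D * (1 + (1 + R) / t₀) ^ (n + 1)) * weight x ^ j := by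
  have hm := weight_pos x
  rw [mul_assoc _ _ (weight x ^ j)]
  refine norm_conv_le hB hR fun y hy => (hΦ _ (ht₀.trans_le ht)).trans ?_
  rw [mul_assoc]
  refine mul_le_mul_of_nonneg_left ?_ hD
  refine (pow_le_pow_left₀ (by positivity) (inv_sqrt_quad_le_weight hR0 ht₀ ht x hy) k).trans ?_
  rw [mul_pow]
  have hL : 1 ≤ 1 + (1 + R) / t₀ := by
    have : 0 ≤ (1 + R) / t₀ := by positivity
    linarith
  gcongr ?_ * ?_
  · exact pow_le_pow_right₀ hL hk
  · exact pow_le_pow_of_le_one hm.le (weight_le_one x) hjk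

/-- The convolution of `g` with the Newtonian kernel. -/
noncomputable def newtonPotential (hn : 2 ≤ n) {g : Euc n → ℝ} (hg : Continuous g) {B R : ℝ}
    (hB : ∀ y, |g y| ≤ B) (hR0 : 0 ≤ R) (hR : Function.support g ⊆ closedBall 0 R) :
    DecayingHarmonic n where
  w := conv g newtonKer
  wt := conv g kerT
  wtt := conv g kerTT
  gw := conv g kerGrad
  gwt := conv g kerGradT
  hw := conv g kerHess
  hasDerivAt_w x _ ht := hasDerivAt_conv hg (hasCompactSupport_of_support_subset hR)
    (fun z _ => hasDerivAt_newtonKer z) (fun _ => continuous_newtonKer) continuousOn_kerT x ht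
  hasDerivAt_wt x _ ht := hasDerivAt_conv hg (hasCompactSupport_of_support_subset hR)
    (fun z _ => hasDerivAt_kerT z) (fun _ => continuous_of_continuousOn_prod continuousOn_kerT)
    continuousOn_kerTT x ht
  hasDerivAt_gw x _ ht := hasDerivAt_conv hg (hasCompactSupport_of_support_subset hR)
    (fun z _ => hasDerivAt_kerGrad z) (fun _ => continuous_kerGrad) continuousOn_kerGradT x ht
  hasFDerivAt_w x _ ht := by
    have hgc := hasCompactSupport_of_support_subset hR
    rw [innerSL_conv hg hgc (continuous_kerGrad ht)]
    exact hasFDerivAt_conv hg hgc (fun z => hasFDerivAt_newtonKer z ht)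
      ((innerSL ℝ).continuous.comp (continuous_kerGrad ht)) x
  hasFDerivAt_wt x _ ht := by
    have hgc := hasCompactSupport_of_support_subset hR
    have hc := continuous_of_continuousOn_prod (continuousOn_kerGradT (n := n)) ht
    rw [innerSL_conv hg hgc hc]
    exact hasFDerivAt_conv hg hgc (fun z => hasFDerivAt_kerT z ht)
      ((innerSL ℝ).continuous.comp hc) x
  hasFDerivAt_gw x _ ht := hasFDerivAt_conv hg (hasCompactSupport_of_support_subset hR)
    (fun z => hasFDerivAt_kerGrad z ht) (continuous_kerHess ht) x
  harmonic x t ht := by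
    have hgc := hasCompactSupport_of_support_subset hR
    have h1 : ∀ i : Fin n, (conv g kerHess x t (EuclideanSpace.single i 1)) i =
        ∫ y, g y * (kerHess (x - y) t (EuclideanSpace.single i 1)) i := by
      intro i
      have h := integrable_smul_comp_sub hg hgc (continuous_kerHess ht) x
      have h2 := ((EuclideanSpace.proj (𝕜 := ℝ) i).comp
        (ContinuousLinearMap.apply ℝ (Euc n) (EuclideanSpace.single i 1))).integral_comp_comm h
      simpa [conv] using h2.symm
    have h2 : ∀ i : Fin n, Integrable fun y =>
        g y * (kerHess (x - y) t (EuclideanSpace.single i 1)) i := by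
      intro i
      have h := integrable_smul_comp_sub hg hgc (continuous_kerHess ht) x
      simpa using ((EuclideanSpace.proj (𝕜 := ℝ) i).comp
        (ContinuousLinearMap.apply ℝ (Euc n) (EuclideanSpace.single i 1))).integrable_comp h
    simp only [h1]
    rw [← integral_finsetSum _ fun i _ => h2 i, ← integral_neg, conv]
    congr 1 with y
    rw [kerTT_eq_neg_trace _ ht, ← Finset.mul_sum, smul_eq_mul, mul_neg]
  continuous_wtt ht := continuous_conv hg (hasCompactSupport_of_support_subset hR)
    (continuous_of_continuousOn_prod continuousOn_kerTT ht)
  continuous_gwt ht := continuous_conv hg (hasCompactSupport_of_support_subset hR)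
    (continuous_of_continuousOn_prod continuousOn_kerGradT ht)
  continuous_hw ht := continuous_conv hg (hasCompactSupport_of_support_subset hR)
    (continuous_kerHess ht)
  bound t₀ ht₀ := by
    have hn1 : 1 ≤ n := by lia
    have hD := (kerConst_pos hn1).le
    refine ⟨B * (volume : Measure (Euc n)).real (closedBall 0 R) *
      (kerConst n * (1 + (1 + R) / t₀) ^ (n + 1)), fun t ht x => ⟨?_, ?_, ?_, ?_, ?_, ?_⟩⟩
    · simpa only [pow_one, norm_eq_abs] using
        norm_conv_le_weight (Φ := newtonKer) (j := 1) (k := n - 1)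
        (by lia) (by lia) hB
        hR0 hR hD (fun x _ ht => abs_newtonKer_le hn1 x ht) ht₀ ht x
    · exact norm_conv_le_weight (Φ := kerT) (j := n) (k := n) (by lia) (by lia) hB
        hR0 hR hD (fun x _ ht => abs_kerT_le hn1 x ht) ht₀ ht x
    · exact norm_conv_le_weight (Φ := kerTT) (j := n) (k := n + 1) (by lia) (by lia) hB
        hR0 hR hD (fun x _ ht => abs_kerTT_le hn1 x ht) ht₀ ht x
    · exact norm_conv_le_weight (Φ := kerGrad) (j := n) (k := n) (by lia) (by lia) hB
        hR0 hR hD (fun x _ ht => norm_kerGrad_le hn1 x ht) ht₀ ht x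
    · exact norm_conv_le_weight (Φ := kerGradT) (j := n) (k := n + 1) (by lia) (by lia) hB
        hR0 hR hD (fun x _ ht => norm_kerGradT_le hn1 x ht) ht₀ ht x
    · exact norm_conv_le_weight (Φ := kerHess) (j := n) (k := n + 1) (by lia) (by lia) hB
        hR0 hR hD (fun x _ ht => norm_kerHess_le hn1 x ht) ht₀ ht x
  tendsto_wt := tendsto_conv_atTop (by lia) hB hR (fun x _ ht => abs_kerT_le (by lia) x ht)
    (kerConst_pos (by lia)).le
  tendsto_gw := tendsto_conv_atTop (by lia) hB hR (fun x _ ht => norm_kerGrad_le (by lia) x ht)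
    (kerConst_pos (by lia)).le

end Decay

section Divergence

variable {n : ℕ}

/-- The integral of a divergence over the whole space vanishes. -/
lemma integral_divergence_eq_zero {Y : Euc n → Euc n} {Y' : Euc n → Euc n →L[ℝ] Euc n}
    (hY : ∀ x, HasFDerivAt Y (Y' x) x) (hYi : Integrable Y) (hYi' : Integrable Y') :
    ∫ x, ∑ i, (Y' x (EuclideanSpace.single i 1)) i = 0 := by
  have hcoord (i : Fin n) : Integrable fun x => (Y' x (EuclideanSpace.single i 1)) i := by
    simpa using ((EuclideanSpace.proj (𝕜 := ℝ) i).comp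
      (ContinuousLinearMap.apply ℝ (Euc n) (EuclideanSpace.single i 1))).integrable_comp hYi'
  rw [integral_finsetSum _ fun i _ => hcoord i]
  refine Finset.sum_eq_zero fun i _ => ?_
  have h := integral_bilinear_hasFDerivAt_right_eq_neg_left_of_integrable (μ := volume)
    (B := ContinuousLinearMap.mul ℝ ℝ) (f := fun x => Y x i) (g := fun _ : Euc n => (1 : ℝ))
    (f' := fun x => (EuclideanSpace.proj (𝕜 := ℝ) i).comp (Y' x)) (g' := fun _ => 0)
    (v := EuclideanSpace.single i 1) (by simpa using hcoord i) (by simp)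
    (by simpa using (EuclideanSpace.proj (𝕜 := ℝ) i).integrable_comp hYi)
    (fun x _ => (EuclideanSpace.proj (𝕜 := ℝ) i).hasFDerivAt.comp x (hY x))
    (fun x _ => hasFDerivAt_const _ _)
  simpa using h.symm

/-- Integration by parts for the product of a function and a vector field. -/
lemma integral_mul_divergence {φ : Euc n → ℝ} {φ' Y : Euc n → Euc n}
    {Y' : Euc n → Euc n →L[ℝ] Euc n} (hφ : ∀ x, HasFDerivAt φ (innerSL ℝ (φ' x)) x)
    (hY : ∀ x, HasFDerivAt Y (Y' x) x) (h1 : Integrable fun x => φ x • Y x)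
    (h2 : Integrable fun x => φ x • Y' x) (h3 : Integrable fun x => ‖φ' x‖ * ‖Y x‖)
    (hφ' : AEStronglyMeasurable φ') :
    ∫ x, (φ x * ∑ i, (Y' x (EuclideanSpace.single i 1)) i + inner ℝ (φ' x) (Y x)) = 0 := by
  have hYc : Continuous Y := continuous_iff_continuousAt.2 fun x => (hY x).continuousAt
  have h4 : Integrable fun x => (innerSL ℝ (φ' x)).smulRight (Y x) := by
    refine h3.mono ?_ (.of_forall fun x => by simp)
    exact (ContinuousLinearMap.smulRightL ℝ (Euc n) (Euc n)).aestronglyMeasurable_comp₂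
      ((innerSL ℝ).continuous.comp_aestronglyMeasurable hφ') hYc.aestronglyMeasurable
  have h5 := Integrable.add (ε' := Euc n →L[ℝ] Euc n) h2 h4
  rw [← integral_divergence_eq_zero (Y := fun x => φ x • Y x)
    (Y' := fun x => φ x • Y' x + (innerSL ℝ (φ' x)).smulRight (Y x))
    (fun x => (hφ x).smul (hY x)) h1 h5]
  congr 1 with x
  simp only [add_apply, smul_apply, ContinuousLinearMap.smulRight_apply, PiLp.add_apply,
    PiLp.smul_apply, smul_eq_mul, Finset.sum_add_distrib, Finset.mul_sum, innerSL_apply_apply,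
    EuclideanSpace.inner_single_right, conj_trivial, one_mul]
  congr 1
  rw [PiLp.inner_apply]
  exact Finset.sum_congr rfl fun i _ => by rw [RCLike.inner_apply, conj_trivial, mul_comm]

end Divergence

namespace DecayingHarmonic

variable {n : ℕ} (W : DecayingHarmonic n)

lemma continuous_w {t : ℝ} (ht : 0 < t) : Continuous (W.w · t) :=
  continuous_iff_continuousAt.2 fun x => (W.hasFDerivAt_w x ht).continuousAt

lemma continuous_wt {t : ℝ} (ht : 0 < t) : Continuous (W.wt · t) :=
  continuous_iff_continuousAt.2 fun x => (W.hasFDerivAt_wt x ht).continuousAt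

lemma continuous_gw {t : ℝ} (ht : 0 < t) : Continuous (W.gw · t) :=
  continuous_iff_continuousAt.2 fun x => (W.hasFDerivAt_gw x ht).continuousAt

/-- A product of two quantities which decay like `weight` and `weight ^ n` is dominated by an
integrable function. -/
lemma mul_le_weight {a b C : ℝ} (x : Euc n) (ha0 : 0 ≤ a) (ha : a ≤ C * weight x)
    (hb0 : 0 ≤ b) (hb : b ≤ C * weight x ^ n) : a * b ≤ C ^ 2 * weight x ^ (n + 1) := by
  have hC : 0 ≤ C * weight x := ha0.trans ha
  have hC' : 0 ≤ C := nonneg_of_mul_nonneg_left hC (weight_pos x)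
  calc a * b ≤ (C * weight x) * (C * weight x ^ n) := by
        gcongr
    _ = _ := by ring

/-- All the products of derivatives which occur in the energy estimates are dominated by an
integrable function. -/
lemma exists_product_bound (hn : 1 ≤ n) {t₀ : ℝ} (ht₀ : 0 < t₀) : ∃ C, 0 ≤ C ∧ ∀ t ≥ t₀, ∀ x,
    |W.w x t| * |W.wt x t| ≤ C * weight x ^ (n + 1) ∧
    |W.w x t| * |W.wtt x t| ≤ C * weight x ^ (n + 1) ∧
    |W.w x t| * ‖W.gw x t‖ ≤ C * weight x ^ (n + 1) ∧
    |W.w x t| * ‖W.hw x t‖ ≤ C * weight x ^ (n + 1) ∧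
    |W.wt x t| * |W.wt x t| ≤ C * weight x ^ (n + 1) ∧
    |W.wt x t| * |W.wtt x t| ≤ C * weight x ^ (n + 1) ∧
    |W.wt x t| * ‖W.gw x t‖ ≤ C * weight x ^ (n + 1) ∧
    |W.wt x t| * ‖W.hw x t‖ ≤ C * weight x ^ (n + 1) ∧
    ‖W.gw x t‖ * ‖W.gw x t‖ ≤ C * weight x ^ (n + 1) ∧
    ‖W.gw x t‖ * ‖W.gwt x t‖ ≤ C * weight x ^ (n + 1) := by
  obtain ⟨C, hC⟩ := W.bound t₀ ht₀
  refine ⟨C ^ 2, by positivity, fun t ht x => ?_⟩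
  obtain ⟨h1, h2, h3, h4, h5, h6⟩ := hC t ht x
  have hC' : 0 ≤ C := nonneg_of_mul_nonneg_left ((abs_nonneg _).trans h1) (weight_pos x)
  have h2' := h2.trans (mul_le_mul_of_nonneg_left (weight_pow_le hn x) hC')
  have h4' := h4.trans (mul_le_mul_of_nonneg_left (weight_pow_le hn x) hC')
  exact ⟨mul_le_weight x (abs_nonneg _) h1 (abs_nonneg _) h2,
    mul_le_weight x (abs_nonneg _) h1 (abs_nonneg _) h3,
    mul_le_weight x (abs_nonneg _) h1 (norm_nonneg _) h4,
    mul_le_weight x (abs_nonneg _) h1 (norm_nonneg _) h6,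
    mul_le_weight x (abs_nonneg _) h2' (abs_nonneg _) h2,
    mul_le_weight x (abs_nonneg _) h2' (abs_nonneg _) h3,
    mul_le_weight x (abs_nonneg _) h2' (norm_nonneg _) h4,
    mul_le_weight x (abs_nonneg _) h2' (norm_nonneg _) h6,
    mul_le_weight x (norm_nonneg _) h4' (norm_nonneg _) h4,
    mul_le_weight x (norm_nonneg _) h4' (norm_nonneg _) h5⟩

lemma integrable_of_le_weight {F : Type*} [NormedAddCommGroup F] {f : Euc n → F} {C : ℝ}
    (hf : Continuous f) (h : ∀ x, ‖f x‖ ≤ C * weight x ^ (n + 1)) : Integrable f :=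
  (integrable_weight_pow.const_mul C).mono' hf.aestronglyMeasurable (.of_forall h)

/-- The localized energy difference. -/
noncomputable def energyDiff (χ : Euc n → ℝ) (t : ℝ) : ℝ :=
  ∫ x, χ x * (W.wt x t ^ 2 - ‖W.gw x t‖ ^ 2)

/-- The Dirichlet energy above height `t`, as a boundary integral. -/
noncomputable def flux (t : ℝ) : ℝ := ∫ x, W.w x t * -W.wt x t

lemma integrable_wt_sq (hn : 1 ≤ n) {t : ℝ} (ht : 0 < t) :
    Integrable fun x => W.wt x t ^ 2 := by
  obtain ⟨C, hC0, hC⟩ := W.exists_product_bound hn ht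
  have := W.continuous_wt ht
  refine integrable_of_le_weight (C := C) (by fun_prop) fun x => ?_
  obtain ⟨-, -, -, -, h, -⟩ := hC t le_rfl x
  rwa [norm_pow, norm_eq_abs, sq]

lemma integrable_gw_sq (hn : 1 ≤ n) {t : ℝ} (ht : 0 < t) :
    Integrable fun x => ‖W.gw x t‖ ^ 2 := by
  obtain ⟨C, hC0, hC⟩ := W.exists_product_bound hn ht
  have := W.continuous_gw ht
  refine integrable_of_le_weight (C := C) (by fun_prop) fun x => ?_
  obtain ⟨-, -, -, -, -, -, -, -, h, -⟩ := hC t le_rfl x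
  rwa [norm_pow, norm_norm, sq]

lemma hasDerivAt_flux (hn : 1 ≤ n) {t : ℝ} (ht : 0 < t) :
    HasDerivAt W.flux (-∫ x, (W.wt x t ^ 2 + ‖W.gw x t‖ ^ 2)) t := by
  have ht2 : 0 < t / 2 := by linarith
  obtain ⟨C, hC0, hC⟩ := W.exists_product_bound hn ht2
  have hD := (hasDerivAt_integral_of_dominated_loc_of_deriv_le (𝕜 := ℝ) (μ := volume)
    (F := fun t x => W.w x t * -W.wt x t)
    (F' := fun t x => W.wt x t * -W.wt x t + W.w x t * -W.wtt x t)
    (bound := fun x => 2 * C * weight x ^ (n + 1)) (x₀ := t)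
    (Ioi_mem_nhds (by linarith) : Ioi (t / 2) ∈ 𝓝 t) ?_ ?_ ?_ ?_ ?_ ?_).2
  · refine hD.congr_deriv ?_
    have hw := W.continuous_w ht
    have hgw := W.continuous_gw ht
    have hhw := W.continuous_hw ht
    have hdiv := integral_mul_divergence (fun x => W.hasFDerivAt_w x ht)
      (fun x => W.hasFDerivAt_gw x ht)
      (integrable_of_le_weight (C := C) (by fun_prop) fun x => by
        rw [norm_smul]; exact (hC t (by linarith) x).2.2.1)
      (integrable_of_le_weight (C := C) (by fun_prop) fun x => by
        rw [norm_smul]; exact (hC t (by linarith) x).2.2.2.1)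
      (by simpa [sq] using W.integrable_gw_sq hn ht) hgw.aestronglyMeasurable
    rw [← integral_neg, ← add_zero (∫ x, -(_ : ℝ)), ← hdiv, ← integral_add]
    · congr 1 with x
      rw [real_inner_self_eq_norm_sq, W.harmonic x ht]
      ring
    · exact ((W.integrable_wt_sq hn ht).add (W.integrable_gw_sq hn ht)).neg
    · have h1 : Integrable fun x => W.w x t * W.wtt x t := by
        have := W.continuous_wtt ht
        refine integrable_of_le_weight (C := C) (by fun_prop) fun x => ?_
        rw [norm_mul]; exact (hC t (by linarith) x).2.1
      refine (h1.neg.add (W.integrable_gw_sq hn ht)).congr (.of_forall fun x => ?_)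
      simp only [Pi.add_apply, Pi.neg_apply]
      rw [real_inner_self_eq_norm_sq, W.harmonic x ht]
      ring
  · filter_upwards [lt_mem_nhds ht] with s hs
    exact ((W.continuous_w hs).mul (W.continuous_wt hs).neg).aestronglyMeasurable
  · refine integrable_of_le_weight (C := C) ((W.continuous_w ht).mul (W.continuous_wt ht).neg)
      fun x => ?_
    rw [norm_mul, norm_neg]
    exact (hC t (by linarith) x).1
  · exact (((W.continuous_wt ht).mul (W.continuous_wt ht).neg).add
      ((W.continuous_w ht).mul (W.continuous_wtt ht).neg)).aestronglyMeasurable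
  · refine .of_forall fun x s hs => (norm_add_le _ _).trans ?_
    rw [norm_mul, norm_mul, norm_neg, norm_neg]
    obtain ⟨-, h1, -, -, h2, -⟩ := hC s (le_of_lt hs) x
    simp only [norm_eq_abs]
    linarith
  · exact integrable_weight_pow.const_mul _
  · refine .of_forall fun x s hs => ?_
    have hs' : 0 < s := ht2.trans hs
    exact (W.hasDerivAt_w x hs').mul (W.hasDerivAt_wt x hs').neg

lemma tendsto_flux (hn : 1 ≤ n) : Tendsto W.flux atTop (𝓝 0) := by
  obtain ⟨C, hC0, hC⟩ := W.exists_product_bound hn one_pos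
  obtain ⟨D, hD⟩ := W.bound 1 one_pos
  rw [← integral_zero (Euc n) ℝ]
  refine tendsto_integral_filter_of_dominated_convergence (fun x => C * weight x ^ (n + 1)) ?_ ?_
    (integrable_weight_pow.const_mul C) (.of_forall fun x => ?_)
  · filter_upwards [eventually_gt_atTop 0] with t ht
    exact ((W.continuous_w ht).mul (W.continuous_wt ht).neg).aestronglyMeasurable
  · filter_upwards [eventually_ge_atTop 1] with t ht
    refine .of_forall fun x => ?_
    rw [norm_mul, norm_neg]
    exact (hC t ht x).1
  · have h1 : Tendsto (fun t => D * weight x * |W.wt x t|) atTop (𝓝 0) := by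
      simpa using (W.tendsto_wt x).abs.const_mul (D * weight x)
    refine squeeze_zero_norm' ?_ h1
    filter_upwards [eventually_ge_atTop 1] with t ht
    rw [norm_mul, norm_neg]
    exact mul_le_mul_of_nonneg_right (hD t ht x).1 (abs_nonneg _)

section Localized

variable {χ : Euc n → ℝ} {χ' : Euc n → Euc n} {M : ℝ}

lemma hasDerivAt_energyDiff (hn : 1 ≤ n) (hχ : ∀ x, HasFDerivAt χ (innerSL ℝ (χ' x)) x)
    (hχ1 : ∀ x, |χ x| ≤ 1) (hχc : Continuous χ') (hM : ∀ x, ‖χ' x‖ ≤ M) {t : ℝ} (ht : 0 < t) :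
    HasDerivAt (W.energyDiff χ) (∫ x, 2 * (W.wt x t * inner ℝ (χ' x) (W.gw x t))) t := by
  have ht2 : 0 < t / 2 := by linarith
  obtain ⟨C, hC0, hC⟩ := W.exists_product_bound hn ht2
  have hχC : Continuous χ := continuous_iff_continuousAt.2 fun x => (hχ x).continuousAt
  have hwt := W.continuous_wt ht
  have hwtt := W.continuous_wtt ht
  have hgw := W.continuous_gw ht
  have hgwt := W.continuous_gwt ht
  have hhw := W.continuous_hw ht
  have hM0 : 0 ≤ M := (norm_nonneg _).trans (hM 0)
  have hbd : ∀ s > t / 2, ∀ x, ‖χ x * (2 * W.wt x s * W.wtt x s -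
      2 * inner ℝ (W.gw x s) (W.gwt x s))‖ ≤ 4 * C * weight x ^ (n + 1) := by
    intro s hs x
    obtain ⟨-, -, -, -, -, h1, -, -, -, h2⟩ := hC s (le_of_lt hs) x
    rw [norm_mul]
    refine (mul_le_of_le_one_left (norm_nonneg _) (hχ1 x)).trans ((norm_sub_le _ _).trans ?_)
    have h3 := abs_real_inner_le_norm (W.gw x s) (W.gwt x s)
    rw [norm_mul, norm_mul, norm_mul, norm_two]
    simp only [norm_eq_abs]
    linarith
  have hD := (hasDerivAt_integral_of_dominated_loc_of_deriv_le (𝕜 := ℝ) (μ := volume)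
    (F := fun t x => χ x * (W.wt x t ^ 2 - ‖W.gw x t‖ ^ 2))
    (F' := fun t x => χ x * (2 * W.wt x t * W.wtt x t - 2 * inner ℝ (W.gw x t) (W.gwt x t)))
    (bound := fun x => 4 * C * weight x ^ (n + 1)) (x₀ := t)
    (Ioi_mem_nhds (by linarith) : Ioi (t / 2) ∈ 𝓝 t) ?_ ?_ ?_ ?_ ?_ ?_).2
  · refine hD.congr_deriv ?_
    have hwx : ∀ x, ‖χ x * W.wt x t‖ ≤ |W.wt x t| := fun x => by
      rw [norm_mul]; exact mul_le_of_le_one_left (norm_nonneg _) (hχ1 x)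
    have hgrad : ∀ x, HasFDerivAt (fun x => χ x * W.wt x t)
        (innerSL ℝ (χ x • W.gwt x t + W.wt x t • χ' x)) x := fun x =>
      ((hχ x).mul (W.hasFDerivAt_wt x ht)).congr_fderiv (by simp)
    have hgradc : Continuous fun x => χ x • W.gwt x t + W.wt x t • χ' x := by fun_prop
    have hdiv := integral_mul_divergence hgrad
      (fun x => W.hasFDerivAt_gw x ht)
      (integrable_of_le_weight (C := C) (by fun_prop) fun x => by
        rw [norm_smul]
        exact (mul_le_mul_of_nonneg_right (hwx x) (norm_nonneg _)).trans
          (hC t (by linarith) x).2.2.2.2.2.2.1)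
      (integrable_of_le_weight (C := C) (by fun_prop) fun x => by
        rw [norm_smul]
        exact (mul_le_mul_of_nonneg_right (hwx x) (norm_nonneg _)).trans
          (hC t (by linarith) x).2.2.2.2.2.2.2.1)
      (integrable_of_le_weight (C := (1 + M) * C) (by fun_prop) fun x => by
        obtain ⟨-, -, -, -, -, -, h1, -, -, h2⟩ := hC t (by linarith) x
        rw [norm_mul, norm_norm, norm_norm]
        have h3 : ‖χ x • W.gwt x t + W.wt x t • χ' x‖ ≤ ‖W.gwt x t‖ + M * |W.wt x t| := by
          refine (norm_add_le _ _).trans ?_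
          rw [norm_smul, norm_smul, mul_comm M]
          exact add_le_add (mul_le_of_le_one_left (norm_nonneg _) (hχ1 x))
            (mul_le_mul_of_nonneg_left (hM x) (norm_nonneg _))
        calc _ ≤ (‖W.gwt x t‖ + M * |W.wt x t|) * ‖W.gw x t‖ :=
              mul_le_mul_of_nonneg_right h3 (norm_nonneg _)
          _ = ‖W.gw x t‖ * ‖W.gwt x t‖ + M * (|W.wt x t| * ‖W.gw x t‖) := by ring
          _ ≤ C * weight x ^ (n + 1) + M * (C * weight x ^ (n + 1)) := by gcongr
          _ = _ := by ring) hgradc.aestronglyMeasurable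
    have hi1 : Integrable fun x => χ x * (2 * W.wt x t * W.wtt x t -
        2 * inner ℝ (W.gw x t) (W.gwt x t)) :=
      integrable_of_le_weight (by fun_prop) (hbd t (by linarith))
    have hi2 : Integrable fun x => 2 * (W.wt x t * inner ℝ (χ' x) (W.gw x t)) := by
      refine integrable_of_le_weight (C := 2 * M * C) (by fun_prop) fun x => ?_
      obtain ⟨-, -, -, -, -, -, h1, -⟩ := hC t (by linarith) x
      have h3 := (abs_real_inner_le_norm (χ' x) (W.gw x t)).trans
        (mul_le_mul_of_nonneg_right (hM x) (norm_nonneg _))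
      rw [norm_mul, norm_mul, norm_two, norm_eq_abs, norm_eq_abs]
      calc _ ≤ 2 * (|W.wt x t| * (M * ‖W.gw x t‖)) := by gcongr
        _ = 2 * M * (|W.wt x t| * ‖W.gw x t‖) := by ring
        _ ≤ 2 * M * (C * weight x ^ (n + 1)) := by gcongr
        _ = _ := by ring
    have hdiv2 := congrArg (-2 * ·) hdiv
    simp only [mul_zero, ← integral_const_mul] at hdiv2
    rw [← sub_eq_zero, ← integral_sub hi1 hi2, ← hdiv2]
    congr 1 with x
    rw [W.harmonic x ht, inner_add_left, inner_smul_left, inner_smul_left,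
      real_inner_comm (W.gw x t) (W.gwt x t)]
    simp only [conj_trivial]
    ring
  · filter_upwards [lt_mem_nhds ht] with s hs
    have := W.continuous_wt hs
    have := W.continuous_gw hs
    exact (by fun_prop : Continuous fun x => χ x * (W.wt x s ^ 2 - ‖W.gw x s‖ ^ 2))
      |>.aestronglyMeasurable
  · exact ((W.integrable_wt_sq hn ht).sub (W.integrable_gw_sq hn ht)).bdd_mul
      hχC.aestronglyMeasurable (.of_forall hχ1)
  · exact (by fun_prop : Continuous fun x => χ x * (2 * W.wt x t * W.wtt x t -
      2 * inner ℝ (W.gw x t) (W.gwt x t))).aestronglyMeasurable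
  · exact .of_forall fun x s hs => hbd s hs x
  · exact integrable_weight_pow.const_mul _
  · refine .of_forall fun x s hs => ?_
    have hs' : 0 < s := ht2.trans hs
    have h1 := (W.hasDerivAt_wt x hs').pow 2
    have h2 := (W.hasDerivAt_gw x hs').norm_sq
    exact ((h1.sub h2).const_mul (χ x)).congr_deriv (by norm_num)

lemma tendsto_energyDiff (hn : 1 ≤ n) (hχC : Continuous χ) (hχ1 : ∀ x, |χ x| ≤ 1) :
    Tendsto (W.energyDiff χ) atTop (𝓝 0) := by
  obtain ⟨C, hC0, hC⟩ := W.exists_product_bound hn one_pos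
  rw [← integral_zero (Euc n) ℝ]
  refine tendsto_integral_filter_of_dominated_convergence (fun x => 2 * C * weight x ^ (n + 1))
    ?_ ?_ (integrable_weight_pow.const_mul _) (.of_forall fun x => ?_)
  · filter_upwards [eventually_gt_atTop 0] with t ht
    have := W.continuous_wt ht
    have := W.continuous_gw ht
    exact (by fun_prop : Continuous fun x => χ x * (W.wt x t ^ 2 - ‖W.gw x t‖ ^ 2))
      |>.aestronglyMeasurable
  · filter_upwards [eventually_ge_atTop 1] with t ht
    refine .of_forall fun x => ?_
    obtain ⟨-, -, -, -, h1, -, -, -, h2, -⟩ := hC t ht x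
    rw [norm_mul]
    refine (mul_le_of_le_one_left (norm_nonneg _) (hχ1 x)).trans ((norm_sub_le _ _).trans ?_)
    rw [norm_pow, norm_pow, norm_norm, norm_eq_abs, sq, sq]
    linarith
  · simpa using ((((W.tendsto_wt x).pow 2).sub ((W.tendsto_gw x).norm.pow 2)).const_mul (χ x))

/-- The localized energy inequality. -/
lemma abs_energyDiff_le (hn : 1 ≤ n) (hχ : ∀ x, HasFDerivAt χ (innerSL ℝ (χ' x)) x)
    (hχ1 : ∀ x, |χ x| ≤ 1) (hχc : Continuous χ') (hM : ∀ x, ‖χ' x‖ ≤ M) {t : ℝ} (ht : 0 < t) :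
    |W.energyDiff χ t| ≤ M * W.flux t := by
  have hχC : Continuous χ := continuous_iff_continuousAt.2 fun x => (hχ x).continuousAt
  have hM0 : 0 ≤ M := (norm_nonneg _).trans (hM 0)
  have hder : ∀ s, 0 < s → |∫ x, 2 * (W.wt x s * inner ℝ (χ' x) (W.gw x s))| ≤
      M * ∫ x, (W.wt x s ^ 2 + ‖W.gw x s‖ ^ 2) := by
    intro s hs
    rw [← integral_const_mul, ← norm_eq_abs]
    refine norm_integral_le_of_norm_le
      (((W.integrable_wt_sq hn hs).add (W.integrable_gw_sq hn hs)).const_mul M)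
      (.of_forall fun x => ?_)
    have h3 := (abs_real_inner_le_norm (χ' x) (W.gw x s)).trans
      (mul_le_mul_of_nonneg_right (hM x) (norm_nonneg _))
    rw [norm_mul, norm_mul, norm_two, norm_eq_abs, norm_eq_abs]
    calc _ ≤ 2 * (|W.wt x s| * (M * ‖W.gw x s‖)) := by gcongr
      _ = M * (2 * |W.wt x s| * ‖W.gw x s‖) := by ring
      _ ≤ _ := by
        gcongr
        rw [← sq_abs (W.wt x s)]
        exact two_mul_le_add_sq _ _
  have hlow : W.energyDiff χ t - M * W.flux t ≤ 0 := by
    have hd : ∀ s ∈ Ioi (0 : ℝ), HasDerivAt (fun s => W.energyDiff χ s - M * W.flux s) _ s :=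
      fun s hs => (W.hasDerivAt_energyDiff hn hχ hχ1 hχc hM hs).sub
        ((W.hasDerivAt_flux hn hs).const_mul M)
    have hmono : MonotoneOn (fun s => W.energyDiff χ s - M * W.flux s) (Ioi 0) := by
      refine monotoneOn_of_deriv_nonneg (convex_Ioi 0)
        (fun s hs => (hd s hs).continuousAt.continuousWithinAt) ?_ ?_
      · rw [interior_Ioi]
        exact fun s hs => (hd s hs).differentiableAt.differentiableWithinAt
      · rw [interior_Ioi]
        intro s hs
        rw [(hd s hs).deriv]
        linarith [neg_le_of_abs_le (hder s hs)]
    refine ge_of_tendsto (f := fun s => W.energyDiff χ s - M * W.flux s) (x := atTop) ?_ ?_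
    · simpa using (W.tendsto_energyDiff hn hχC hχ1).sub ((W.tendsto_flux hn).const_mul M)
    · filter_upwards [eventually_ge_atTop t] with s hs
      exact hmono ht (ht.trans_le hs : (0 : ℝ) < s) hs
  have hhigh : 0 ≤ W.energyDiff χ t + M * W.flux t := by
    have hd : ∀ s ∈ Ioi (0 : ℝ), HasDerivAt (fun s => W.energyDiff χ s + M * W.flux s) _ s :=
      fun s hs => (W.hasDerivAt_energyDiff hn hχ hχ1 hχc hM hs).add
        ((W.hasDerivAt_flux hn hs).const_mul M)
    have hanti : AntitoneOn (fun s => W.energyDiff χ s + M * W.flux s) (Ioi 0) := by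
      refine antitoneOn_of_deriv_nonpos (convex_Ioi 0)
        (fun s hs => (hd s hs).continuousAt.continuousWithinAt) ?_ ?_
      · rw [interior_Ioi]
        exact fun s hs => (hd s hs).differentiableAt.differentiableWithinAt
      · rw [interior_Ioi]
        intro s hs
        rw [(hd s hs).deriv]
        linarith [le_of_abs_le (hder s hs)]
    refine le_of_tendsto (f := fun s => W.energyDiff χ s + M * W.flux s) (x := atTop) ?_ ?_
    · simpa using (W.tendsto_energyDiff hn hχC hχ1).add ((W.tendsto_flux hn).const_mul M)
    · filter_upwards [eventually_ge_atTop t] with s hs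
      exact hanti ht (ht.trans_le hs : (0 : ℝ) < s) hs
  exact abs_le.2 ⟨by linarith, by linarith⟩

/-- The global energy identity. -/
lemma integral_gw_sq (hn : 1 ≤ n) {t : ℝ} (ht : 0 < t) :
    ∫ x, ‖W.gw x t‖ ^ 2 = ∫ x, W.wt x t ^ 2 := by
  have h := W.abs_energyDiff_le (χ := fun _ => 1) (χ' := fun _ => 0) (M := 0) hn
    (fun x => by simpa using hasFDerivAt_const (𝕜 := ℝ) (1 : ℝ) x) (by simp) continuous_const
    (by simp) ht
  rw [zero_mul, abs_nonpos_iff, energyDiff] at h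
  simp only [one_mul] at h
  rw [integral_sub (W.integrable_wt_sq hn ht) (W.integrable_gw_sq hn ht)] at h
  linarith

end Localized

end DecayingHarmonic

section UniformLimits

variable {n : ℕ}

lemma eventually_prod_top_iff {α β : Type*} {l : Filter α} {p : α × β → Prop} :
    (∀ᶠ z in l ×ˢ ⊤, p z) ↔ ∀ᶠ t in l, ∀ x, p (t, x) := by
  rw [← principal_univ, eventually_prod_principal_iff]
  simp

variable {F : Type*} [NormedAddCommGroup F] [NormedSpace ℝ F] {g : Euc n → ℝ}

/-- Rescaling of a convolution. -/
lemma conv_eq_integral_scaled (g : Euc n → ℝ) (Φ : Euc n → ℝ → F) (x : Euc n) {t : ℝ}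
    (ht : 0 < t) : conv g Φ x t = ∫ z, g (x - t • z) • (t ^ n • Φ (t • z) t) := by
  have h1 : conv g Φ x t = ∫ z, g (x - z) • Φ z t := by
    rw [conv, ← integral_sub_left_eq_self _ volume x]
    simp
  have h2 := Measure.integral_comp_smul (volume : Measure (Euc n))
    (fun z => g (x - z) • Φ z t) t
  rw [finrank_euclideanSpace_fin, abs_of_pos (by positivity)] at h2
  rw [h1, ← smul_inv_smul₀ (pow_pos ht n).ne' (∫ z, g (x - z) • Φ z t), ← h2, ← integral_smul]
  congr 1 with z
  rw [smul_comm]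

/-- An integrable kernel gives rise to an approximation of a multiple of the identity. -/
lemma tendsto_integral_smul_scaled (hg : Continuous g) (hgc : HasCompactSupport g)
    {Ψ : Euc n → F} (hΨ : Integrable Ψ) :
    Tendsto (fun p : ℝ × Euc n => ∫ z, (g (p.2 - p.1 • z) - g p.2) • Ψ z) (𝓝[>] 0 ×ˢ ⊤) (𝓝 0) := by
  obtain ⟨B, hB⟩ := hg.bounded_above_of_compact_support hgc
  have huc := hg.uniformContinuous_of_tendsto_cocompact hgc.is_zero_at_infty
  rw [← integral_zero (Euc n) F]
  refine tendsto_integral_filter_of_dominated_convergence (fun z => 2 * B * ‖Ψ z‖) ?_ ?_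
    (hΨ.norm.const_mul _) (.of_forall fun z => ?_)
  · refine .of_forall fun p => ?_
    exact (by fun_prop : Continuous fun z => g (p.2 - p.1 • z) - g p.2).aestronglyMeasurable.smul
      hΨ.aestronglyMeasurable
  · refine .of_forall fun p => .of_forall fun z => ?_
    rw [norm_smul]
    gcongr
    linarith [norm_sub_le (g (p.2 - p.1 • z)) (g p.2), hB (p.2 - p.1 • z), hB p.2]
  · rw [← zero_smul ℝ (Ψ z)]
    refine Tendsto.smul_const ?_ _
    rw [Metric.tendsto_nhds]
    intro ε hε
    obtain ⟨δ, hδ, h⟩ := Metric.uniformContinuous_iff.1 huc ε hε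
    rw [eventually_prod_top_iff]
    have h0 : Tendsto (fun t : ℝ => ‖t • z‖) (𝓝[>] 0) (𝓝 0) := by
      have : Continuous fun t : ℝ => ‖t • z‖ := by fun_prop
      simpa using (this.tendsto 0).mono_left nhdsWithin_le_nhds
    filter_upwards [h0.eventually_lt_const hδ] with t ht x
    rw [dist_zero_right, ← dist_eq_norm]
    exact h (by simpa [dist_eq_norm] using ht)

/-- The mass of minus the vertical derivative of the kernel. -/
noncomputable def kerMass (n : ℕ) : ℝ := ∫ z : Euc n, -kerT z 1

lemma inv_sqrt_quad_one_le (z : Euc n) : (√(quad z 1))⁻¹ ≤ 2 * weight z := by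
  have h := inv_sqrt_quad_le_weight le_rfl one_pos le_rfl z (mem_closedBall_self le_rfl)
  norm_num at h
  exact h

lemma integrable_kerT_one : Integrable fun z : Euc n => kerT z 1 := by
  have hc := continuous_of_continuousOn_prod (continuousOn_kerT (n := n)) one_pos
  refine DecayingHarmonic.integrable_of_le_weight (C := |2 * kerExp n| * 2 ^ (n + 1)) hc
    fun z => ?_
  rw [kerT, one_mul, quad_rpow_sub_one z one_pos, norm_mul, norm_neg, norm_pow, norm_inv,
    norm_of_nonneg (sqrt_nonneg _), mul_assoc, ← mul_pow, norm_eq_abs]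
  gcongr
  exact inv_sqrt_quad_one_le z

lemma kerT_neg (hn : 2 ≤ n) (z : Euc n) {t : ℝ} (ht : 0 < t) : kerT z t < 0 := by
  have h1 : 0 < kerExp n := by
    unfold kerExp
    have : (2 : ℝ) ≤ n := by exact_mod_cast hn
    linarith
  have := rpow_pos_of_pos (quad_pos z ht) (-kerExp n - 1)
  have : 0 < 2 * kerExp n * (t * quad z t ^ (-kerExp n - 1)) := by positivity
  rw [kerT]
  linarith

lemma kerMass_pos (hn : 2 ≤ n) : 0 < kerMass n := by
  have hc := continuous_of_continuousOn_prod (continuousOn_kerT (n := n)) one_pos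
  exact integral_pos_of_integrable_nonneg_nonzero (x := 0) hc.neg integrable_kerT_one.neg
    (fun z => by simpa using (kerT_neg hn z one_pos).le) (by simpa using (kerT_neg hn 0 one_pos).ne)

lemma quad_smul (z : Euc n) (t : ℝ) : quad (t • z) t = t ^ 2 * quad z 1 := by
  simp only [quad, norm_smul, norm_eq_abs, mul_pow, sq_abs]; ring

lemma sq_rpow_neg {t : ℝ} (ht : 0 < t) (a : ℝ) (k : ℕ) (ha : 2 * a = k) :
    (t ^ 2) ^ (-a) = (t ^ k)⁻¹ := by
  rw [← rpow_natCast t 2, ← rpow_mul ht.le, Nat.cast_ofNat, mul_neg, ha, rpow_neg ht.le,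
    rpow_natCast]

lemma pow_mul_kerT_smul (z : Euc n) {t : ℝ} (ht : 0 < t) : t ^ n * kerT (t • z) t = kerT z 1 := by
  simp only [kerT]
  rw [quad_smul, mul_rpow (by positivity) (quad_pos z one_pos).le,
    show -kerExp n - 1 = -(kerExp n + 1) by ring,
    sq_rpow_neg ht (kerExp n + 1) (n + 1) (by unfold kerExp; push_cast; ring)]
  field_simp
  ring

lemma pow_smul_kerHess_smul (z : Euc n) {t : ℝ} (ht : 0 < t) :
    t • t ^ n • kerHess (t • z) t = kerHess z 1 := by
  simp only [kerHess]
  rw [quad_smul, mul_rpow (by positivity) (quad_pos z one_pos).le,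
    mul_rpow (by positivity) (quad_pos z one_pos).le,
    show -kerExp n - 1 = -(kerExp n + 1) by ring, show -kerExp n - 2 = -(kerExp n + 2) by ring,
    sq_rpow_neg ht (kerExp n + 1) (n + 1) (by unfold kerExp; push_cast; ring),
    sq_rpow_neg ht (kerExp n + 2) (n + 3) (by unfold kerExp; push_cast; ring)]
  ext1 v
  simp only [add_apply, smul_apply, ContinuousLinearMap.id_apply,
    ContinuousLinearMap.smulRight_apply, innerSL_apply_apply, inner_smul_left, conj_trivial,
    smul_add, smul_smul]
  congr 2 <;> (field_simp; ring)

lemma abs_conv_kerT_le (hn : 2 ≤ n) {B : ℝ} (hB : ∀ y, |g y| ≤ B) (x : Euc n) {t : ℝ}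
    (ht : 0 < t) : |conv g kerT x t| ≤ B * kerMass n := by
  rw [conv_eq_integral_scaled g kerT x ht, kerMass, ← integral_const_mul, ← norm_eq_abs]
  refine norm_integral_le_of_norm_le (integrable_kerT_one.neg.const_mul B) (.of_forall fun z => ?_)
  rw [smul_eq_mul, smul_eq_mul, pow_mul_kerT_smul z ht, norm_mul,
    norm_of_nonpos (kerT_neg hn z one_pos).le]
  exact mul_le_mul_of_nonneg_right (hB _) (by linarith [kerT_neg hn z one_pos])

/-- The vertical derivative of the potential converges uniformly to a multiple of `-g`. -/
lemma eventually_abs_conv_kerT_add_le (hg : Continuous g) (hgc : HasCompactSupport g) {ε : ℝ}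
    (hε : 0 < ε) : ∀ᶠ t in 𝓝[>] 0, ∀ x, |conv g kerT x t + kerMass n * g x| ≤ ε := by
  have h := tendsto_integral_smul_scaled hg hgc (integrable_kerT_one (n := n))
  have h1 := eventually_prod_top_iff.1 ((Metric.tendsto_nhds.1 h) ε hε)
  filter_upwards [h1, self_mem_nhdsWithin] with t h2 ht x
  specialize h2 x
  rw [dist_zero_right] at h2
  refine le_of_eq_of_le ?_ h2.le
  rw [norm_eq_abs, conv_eq_integral_scaled g kerT x ht, kerMass, integral_neg, neg_mul,
    ← integral_mul_const, ← sub_eq_add_neg]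
  simp only [smul_eq_mul, pow_mul_kerT_smul _ ht, sub_mul]
  rw [integral_sub]
  · simp only [mul_comm]
  · obtain ⟨B, hB⟩ := hg.bounded_above_of_compact_support hgc
    exact integrable_kerT_one.bdd_mul
      (by fun_prop : Continuous fun z => g (x - t • z)).aestronglyMeasurable
      (.of_forall fun z => hB _)
  · exact integrable_kerT_one.const_mul _

end UniformLimits

section Hessian

variable {n : ℕ}

/-- Integration by parts against a compactly supported function. -/
lemma integral_smul_fderiv_eq_neg {F : Type*} [NormedAddCommGroup F] [NormedSpace ℝ F]
    {φ : Euc n → ℝ} (hφ : ContDiff ℝ 1 φ) (hφc : HasCompactSupport φ) {Y : Euc n → F}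
    {Y' : Euc n → Euc n →L[ℝ] F} (hY : ∀ x, HasFDerivAt Y (Y' x) x) (hY' : Continuous Y')
    (v : Euc n) : ∫ x, φ x • Y' x v = -∫ x, fderiv ℝ φ x v • Y x := by
  have hYc : Continuous Y := continuous_iff_continuousAt.2 fun x => (hY x).continuousAt
  have hφ1 := hφ.continuous
  have hφ2 : Continuous fun x => fderiv ℝ φ x v := hφ.continuous_fderiv_apply one_ne_zero |>.comp
    (by fun_prop : Continuous fun x => (x, v))
  have hφ3 : HasCompactSupport fun x => fderiv ℝ φ x v := hφc.fderiv_apply ℝ v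
  exact integral_bilinear_hasFDerivAt_right_eq_neg_left_of_integrable
    (B := ContinuousLinearMap.lsmul ℝ ℝ)
    ((by fun_prop : Continuous fun x => fderiv ℝ φ x v • Y x).integrable_of_hasCompactSupport
      hφ3.smul_right)
    ((by fun_prop : Continuous fun x => φ x • Y' x v).integrable_of_hasCompactSupport
      hφc.smul_right)
    ((by fun_prop : Continuous fun x => φ x • Y x).integrable_of_hasCompactSupport
      hφc.smul_right)
    (fun x _ => (hφ.differentiable one_ne_zero x).hasFDerivAt) (fun x _ => hY x)

lemma integrable_kerHess_one (hn : 1 ≤ n) : Integrable fun z : Euc n => kerHess z 1 := by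
  have := kerConst_pos hn
  refine DecayingHarmonic.integrable_of_le_weight (C := kerConst n * 2 ^ (n + 1))
    (continuous_kerHess one_pos) fun z => ?_
  refine (norm_kerHess_le hn z one_pos).trans ?_
  rw [mul_assoc, ← mul_pow]
  have := inv_sqrt_quad_one_le z
  gcongr

lemma integral_kerHess_one (hn : 1 ≤ n) : ∫ z : Euc n, kerHess z 1 = 0 := by
  have hC := kerConst_pos hn
  ext1 v
  rw [ContinuousLinearMap.integral_apply (integrable_kerHess_one hn) v]
  let η : ContDiffBump (0 : Euc n) := ⟨1, 2, one_pos, one_lt_two⟩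
  have hη : ContDiff ℝ 1 η := η.contDiff
  have hη0 : η 0 = 1 := η.one_of_mem_closedBall (mem_closedBall_self zero_le_one)
  have hηd : Continuous fun x => fderiv ℝ η x v := hη.continuous_fderiv_apply one_ne_zero |>.comp
    (by fun_prop : Continuous fun x => (x, v))
  obtain ⟨A, hA⟩ := hηd.bounded_above_of_compact_support (η.hasCompactSupport.fderiv_apply ℝ v)
  have hA0 : 0 ≤ A := (norm_nonneg _).trans (hA 0)
  have hAw : ∀ t ∈ Ioo (0 : ℝ) 1, ∀ z, ‖t * fderiv ℝ η (t • z) v‖ ≤ 3 * A * weight z := by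
    intro t ht z
    have hz : 0 < 1 + ‖z‖ := by positivity
    rw [weight, ← div_eq_mul_inv, le_div_iff₀ hz, norm_mul, norm_of_nonneg ht.1.le]
    by_cases h : t * ‖z‖ ≤ 2
    · have h1 : t * (1 + ‖z‖) ≤ 3 := by linarith [ht.2]
      calc t * ‖fderiv ℝ η (t • z) v‖ * (1 + ‖z‖)
          = t * (1 + ‖z‖) * ‖fderiv ℝ η (t • z) v‖ := by ring
        _ ≤ 3 * A := mul_le_mul h1 (hA _) (norm_nonneg _) (by norm_num)
    · have : t • z ∉ tsupport η := by
        rw [η.tsupport_eq, mem_closedBall_zero_iff, norm_smul, norm_of_nonneg ht.1.le]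
        exact h
      rw [fderiv_of_notMem_tsupport ℝ this]
      simp only [zero_apply, norm_zero, mul_zero, zero_mul]
      positivity
  have hsmall : ∀ᶠ t : ℝ in 𝓝[>] 0, t ∈ Ioo (0 : ℝ) 1 := Ioo_mem_nhdsGT one_pos
  have hparts : ∀ t ∈ Ioo (0 : ℝ) 1, ∫ z, η (t • z) • kerHess z 1 v =
      -∫ z, (t * fderiv ℝ η (t • z) v) • kerGrad z 1 := by
    intro t ht
    have h1 : ContDiff ℝ 1 fun z : Euc n => η (t • z) := hη.comp (contDiff_const_smul t)
    have h2 : HasCompactSupport fun z : Euc n => η (t • z) :=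
      η.hasCompactSupport.comp_smul ht.1.ne'
    rw [integral_smul_fderiv_eq_neg h1 h2 (fun z => hasFDerivAt_kerGrad z one_pos)
      (continuous_kerHess one_pos) v]
    congr 2 with z
    rw [fderiv_comp_smul]
    simp
  have hlim1 : Tendsto (fun t : ℝ => ∫ z, η (t • z) • kerHess z 1 v) (𝓝[>] 0)
      (𝓝 (∫ z, kerHess z 1 v)) := by
    have hintg : Integrable fun z : Euc n => kerHess z 1 v :=
      (integrable_kerHess_one hn).apply_continuousLinearMap v
    refine tendsto_integral_filter_of_dominated_convergence (fun z => ‖kerHess z 1 v‖) ?_ ?_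
      hintg.norm (.of_forall fun z => ?_)
    · refine .of_forall fun t => ?_
      have := hη.continuous
      exact (by fun_prop : Continuous fun z => η (t • z)).aestronglyMeasurable.smul
        hintg.aestronglyMeasurable
    · refine .of_forall fun t => .of_forall fun z => ?_
      rw [norm_smul, norm_of_nonneg η.nonneg]
      exact mul_le_of_le_one_left (norm_nonneg _) η.le_one
    · have h1 : Continuous fun t : ℝ => η (t • z) • kerHess z 1 v := by
        have := hη.continuous
        fun_prop
      simpa [hη0] using (h1.tendsto 0).mono_left nhdsWithin_le_nhds
  have hlim2 : Tendsto (fun t : ℝ => ∫ z, (t * fderiv ℝ η (t • z) v) • kerGrad z 1) (𝓝[>] 0)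
      (𝓝 0) := by
    have h0 : (0 : Euc n) = ∫ _ : Euc n, (0 : Euc n) := (integral_zero (Euc n) (Euc n)).symm
    refine Eq.subst (motive := fun a => Tendsto _ _ (𝓝 a)) h0.symm ?_
    refine tendsto_integral_filter_of_dominated_convergence
      (fun z => 3 * A * kerConst n * 2 ^ n * weight z ^ (n + 1)) ?_ ?_
      (integrable_weight_pow.const_mul _) (.of_forall fun z => ?_)
    · refine .of_forall fun t => ?_
      have h1 : Continuous fun z : Euc n => fderiv ℝ η (t • z) v :=
        hηd.comp (continuous_const_smul t)
      exact ((continuous_const.mul h1).smul (continuous_kerGrad one_pos)).aestronglyMeasurable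
    · filter_upwards [hsmall] with t ht
      refine .of_forall fun z => ?_
      rw [norm_smul]
      have h1 : ‖kerGrad z 1‖ ≤ kerConst n * (2 * weight z) ^ n := by
        refine (norm_kerGrad_le hn z one_pos).trans ?_
        have := inv_sqrt_quad_one_le z
        gcongr
      have := weight_pos z
      calc _ ≤ (3 * A * weight z) * (kerConst n * (2 * weight z) ^ n) :=
          mul_le_mul (hAw t ht z) h1 (norm_nonneg _) (by positivity)
        _ = _ := by rw [mul_pow]; ring
    · have h1 : Continuous fun t : ℝ => (t * fderiv ℝ η (t • z) v) • kerGrad z 1 := by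
        have : Continuous fun t : ℝ => fderiv ℝ η (t • z) v := hηd.comp (by fun_prop)
        fun_prop
      simpa using (h1.tendsto 0).mono_left nhdsWithin_le_nhds
  refine tendsto_nhds_unique hlim1 ?_
  rw [zero_apply]
  exact (neg_zero (G := Euc n) ▸ hlim2.neg).congr' (hsmall.mono fun t ht => (hparts t ht).symm)

variable {g : Euc n → ℝ}

/-- The horizontal Hessian of the potential blows up more slowly than `t⁻¹`. -/
lemma eventually_norm_smul_conv_kerHess_le (hn : 1 ≤ n) (hg : Continuous g)
    (hgc : HasCompactSupport g) {ε : ℝ} (hε : 0 < ε) :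
    ∀ᶠ t in 𝓝[>] (0 : ℝ), ∀ x, t * ‖conv g kerHess x t‖ ≤ ε := by
  have h := tendsto_integral_smul_scaled hg hgc (integrable_kerHess_one hn)
  have h1 := eventually_prod_top_iff.1 ((Metric.tendsto_nhds.1 h) ε hε)
  filter_upwards [h1, self_mem_nhdsWithin] with t h2 ht x
  specialize h2 x
  have ht0 : 0 < t := ht
  rw [dist_zero_right] at h2
  refine le_of_eq_of_le ?_ h2.le
  simp only [sub_smul]
  rw [integral_sub, integral_smul (g x), integral_kerHess_one hn, smul_zero, sub_zero,
    ← norm_of_nonneg ht0.le, ← norm_smul, norm_of_nonneg ht0.le,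
    conv_eq_integral_scaled g kerHess x ht,
    ← integral_smul]
  · congr 2 with z : 1
    rw [smul_comm t, pow_smul_kerHess_smul z ht]
  · obtain ⟨B, hB⟩ := hg.bounded_above_of_compact_support hgc
    exact (integrable_kerHess_one hn).bdd_smul B
      (by fun_prop : Continuous fun z => g (x - t • z)).aestronglyMeasurable
      (.of_forall fun z => hB _)
  · exact (integrable_kerHess_one hn).smul (g x)

end Hessian

section VerticalIncrement

variable {n : ℕ} {g : Euc n → ℝ}

/-- Uniform first order expansion of the potential in the vertical variable. -/
lemma eventually_abs_conv_newtonKer_sub_le (hg : Continuous g) (hgc : HasCompactSupport g) {ε : ℝ}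
    (hε : 0 < ε) : ∀ᶠ t in 𝓝[>] (0 : ℝ), ∀ s, 0 < s → s ≤ t → ∀ x,
      |conv g newtonKer x t + kerMass n * t * g x - (conv g newtonKer x s + kerMass n * s * g x)| ≤
        ε * (t - s) := by
  obtain ⟨δ, hδ, h⟩ := mem_nhdsGT_iff_exists_Ioo_subset.1
    (eventually_abs_conv_kerT_add_le hg hgc hε)
  filter_upwards [Ioo_mem_nhdsGT hδ] with t ht s hs hst x
  have hd : ∀ r ∈ Icc s t, HasDerivWithinAt
      (fun r => conv g newtonKer x r + kerMass n * r * g x) (conv g kerT x r + kerMass n * g x)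
      (Icc s t) r := by
    intro r hr
    have h1 := hasDerivAt_conv hg hgc (fun z t ht => hasDerivAt_newtonKer z ht)
      (fun t ht => continuous_newtonKer ht) continuousOn_kerT x (hs.trans_le hr.1)
    have h2 := ((hasDerivAt_id r).const_mul (kerMass n)).mul_const (g x)
    simp only [id, mul_one] at h2
    exact (h1.add h2).hasDerivWithinAt
  have := (convex_Icc s t).norm_image_sub_le_of_norm_hasDerivWithin_le hd
    (fun r hr => h ⟨hs.trans_le hr.1, hr.2.trans_lt ht.2⟩ x) (left_mem_Icc.2 hst)
    (right_mem_Icc.2 hst)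
  simpa [abs_of_nonneg (sub_nonneg.2 hst)] using this

end VerticalIncrement

section BoundaryLimit

variable {n : ℕ}

lemma DecayingHarmonic.integral_gw_sub_sq (W : DecayingHarmonic n) (hn : 1 ≤ n) {s t : ℝ}
    (hs : 0 < s) (ht : 0 < t) :
    ∫ x, ‖W.gw x s - W.gw x t‖ ^ 2 = ∫ x, (W.wt x s - W.wt x t) ^ 2 := by
  have hr : 0 < min s t / 2 := by positivity
  have hrs : 0 ≤ s - min s t / 2 := by linarith [min_le_left s t]
  have hrt : 0 ≤ t - min s t / 2 := by linarith [min_le_right s t]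
  simpa [DecayingHarmonic.sub, DecayingHarmonic.shift] using
    ((W.shift _ hrs).sub (W.shift _ hrt)).integral_gw_sq hn hr

section L2

variable {α F : Type*} [MeasurableSpace α] {μ : Measure α} [NormedAddCommGroup F]

lemma eLpNorm_two_eq_ofReal {f : α → F} (hf : MemLp f 2 μ) :
    eLpNorm f 2 μ = ENNReal.ofReal (√(∫ x, ‖f x‖ ^ 2 ∂μ)) := by
  rw [hf.eLpNorm_eq_integral_rpow_norm two_ne_zero ENNReal.ofNat_ne_top, sqrt_eq_rpow]
  simp

lemma tendsto_eLpNorm_two_zero {f : ℕ → α → F} (hf : ∀ k, MemLp (f k) 2 μ)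
    (h : Tendsto (fun k => ∫ x, ‖f k x‖ ^ 2 ∂μ) atTop (𝓝 0)) :
    Tendsto (fun k => eLpNorm (f k) 2 μ) atTop (𝓝 0) := by
  simp only [eLpNorm_two_eq_ofReal (hf _)]
  have := ENNReal.tendsto_ofReal h.sqrt
  simpa using this

end L2

variable {g : Euc n → ℝ}

/-- Bounds for the potential and its vertical derivative which are uniform up to the boundary. -/
lemma exists_uniform_bound (hn : 2 ≤ n) (hg : Continuous g) {B R : ℝ} (hB : ∀ y, |g y| ≤ B)
    (hR0 : 0 ≤ R) (hR : Function.support g ⊆ closedBall 0 R) :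
    ∃ C, 0 ≤ C ∧ ∀ t ∈ Ioc (0 : ℝ) 1, ∀ x,
      |conv g newtonKer x t| ≤ C * weight x ∧ |conv g kerT x t| ≤ C * weight x ^ n := by
  have hn1 : 1 ≤ n := by lia
  have hgc := hasCompactSupport_of_support_subset hR
  have hB0 : 0 ≤ B := (abs_nonneg _).trans (hB 0)
  have hc := kerMass_pos hn
  have hD := kerConst_pos hn1
  set V := (volume : Measure (Euc n)).real (closedBall 0 R)
  have hV : 0 ≤ V := measureReal_nonneg
  set C₁ := B * kerMass n * (2 * R + 2) ^ n + B * V * (kerConst n * 2 ^ n)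
  have hC₁ : 0 ≤ C₁ := by positivity
  have hwt : ∀ t, 0 < t → ∀ x, |conv g kerT x t| ≤ C₁ * weight x ^ n := by
    intro t ht x
    have hw := weight_pos x
    have hx : 0 < 1 + ‖x‖ := by positivity
    rw [add_mul]
    by_cases hxR : ‖x‖ ≤ 2 * R + 1
    · refine le_add_of_le_of_nonneg ?_ (by positivity)
      refine (abs_conv_kerT_le hn hB x ht).trans ?_
      rw [mul_assoc _ (_ ^ n), ← mul_pow]
      refine le_mul_of_one_le_right (by positivity) (one_le_pow₀ ?_)
      rw [weight, ← div_eq_mul_inv, le_div_iff₀ hx]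
      linarith
    · refine le_add_of_nonneg_of_le (by positivity) ?_
      rw [mul_assoc (B * V), mul_assoc (kerConst n), ← mul_pow]
      rw [← norm_eq_abs]
      refine norm_conv_le (Φ := kerT) hB hR fun y hy => (abs_kerT_le hn1 _ ht).trans ?_
      gcongr
      rw [mem_closedBall_zero_iff] at hy
      have h2 : ‖x‖ ≤ ‖x - y‖ + ‖y‖ := by simpa using norm_add_le (x - y) y
      have h3 := le_sqrt_quad_right (x - y) t
      rw [weight, ← div_eq_mul_inv, inv_le_comm₀ (sqrt_pos.2 (quad_pos _ ht)) (by positivity),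
        inv_div, div_le_iff₀ (by norm_num)]
      linarith
  obtain ⟨C₂, hC₂⟩ := (newtonPotential hn hg hB hR0 hR).bound 1 one_pos
  have hC₂0 : 0 ≤ C₂ := by
    have := (abs_nonneg _).trans (hC₂ 1 le_rfl 0).1
    exact nonneg_of_mul_nonneg_left this (weight_pos 0)
  refine ⟨C₁ + C₂, by positivity, fun t ht x => ⟨?_, (hwt t ht.1 x).trans ?_⟩⟩
  · have hd : ∀ r ∈ Icc t 1, HasDerivWithinAt (conv g newtonKer x) (conv g kerT x r) (Icc t 1) r :=
      fun r hr => (hasDerivAt_conv hg hgc (fun z t ht => hasDerivAt_newtonKer z ht)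
        (fun t ht => continuous_newtonKer ht) continuousOn_kerT x
        (ht.1.trans_le hr.1)).hasDerivWithinAt
    have h1 := (convex_Icc t 1).norm_image_sub_le_of_norm_hasDerivWithin_le hd
      (fun r hr => hwt r (ht.1.trans_le hr.1) x) (right_mem_Icc.2 ht.2) (left_mem_Icc.2 ht.2)
    have h2 : |conv g newtonKer x 1| ≤ C₂ * weight x := (hC₂ 1 le_rfl x).1
    have h3 : ‖t - 1‖ ≤ 1 := by
      rw [norm_eq_abs, abs_le]; constructor <;> linarith [ht.1, ht.2]
    have hw := weight_pos x
    have h4 : C₁ * weight x ^ n * ‖t - 1‖ ≤ C₁ * weight x :=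
      (mul_le_of_le_one_right (by positivity) h3).trans
        (mul_le_mul_of_nonneg_left (weight_pow_le hn1 x) hC₁)
    rw [norm_eq_abs] at h1
    linarith [abs_sub_abs_le_abs_sub (conv g newtonKer x t) (conv g newtonKer x 1)]
  · have hw := weight_pos x
    gcongr
    linarith

/-- A sequence of heights decreasing to zero. -/
noncomputable def height (k : ℕ) : ℝ := 1 / ((k : ℝ) + 1)

lemma height_mem (k : ℕ) : height k ∈ Ioc (0 : ℝ) 1 := by
  refine ⟨Nat.one_div_pos_of_nat, ?_⟩
  rw [height, div_le_one (by positivity)]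
  linarith [(Nat.cast_nonneg k : (0 : ℝ) ≤ k)]

lemma tendsto_height : Tendsto height atTop (𝓝[>] 0) :=
  tendsto_nhdsWithin_iff.2 ⟨tendsto_one_div_add_atTop_nhds_zero_nat,
    .of_forall fun k => (height_mem k).1⟩

lemma tendsto_conv_kerT (hg : Continuous g) (hgc : HasCompactSupport g) (x : Euc n) :
    Tendsto (conv g kerT x) (𝓝[>] 0) (𝓝 (-(kerMass n * g x))) := by
  rw [Metric.tendsto_nhds]
  intro ε hε
  filter_upwards [eventually_abs_conv_kerT_add_le hg hgc (half_pos hε)] with t ht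
  rw [dist_eq, sub_neg_eq_add]
  linarith [ht x]

lemma sq_le_weight {a C : ℝ} (hn : 1 ≤ n) (x : Euc n) (ha : |a| ≤ C * weight x ^ n) :
    a ^ 2 ≤ C ^ 2 * weight x ^ (n + 1) := by
  have hw := weight_pos x
  rw [← sq_abs]
  calc |a| ^ 2 ≤ (C * weight x ^ n) ^ 2 := by gcongr
    _ = C ^ 2 * weight x ^ (n * 2) := by rw [mul_pow, ← pow_mul]
    _ ≤ _ := mul_le_mul_of_nonneg_left
      (pow_le_pow_of_le_one hw.le (weight_le_one x) (by lia)) (sq_nonneg C)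

/-- The horizontal gradients of the potential converge in `L²` at the boundary. -/
lemma exists_gradient_limit (hn : 2 ≤ n) (hg : Continuous g) {B R : ℝ} (hB : ∀ y, |g y| ≤ B)
    (hR0 : 0 ≤ R) (hR : Function.support g ⊆ closedBall 0 R) :
    ∃ G : Euc n → Euc n, MemLp G 2 ∧ (∀ k, MemLp (conv g kerGrad · (height k)) 2) ∧
      Tendsto (fun k => eLpNorm (fun x => conv g kerGrad x (height k) - G x) 2 volume)
        atTop (𝓝 0) := by
  have hn1 : 1 ≤ n := by lia
  have hgc := hasCompactSupport_of_support_subset hR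
  set W := newtonPotential hn hg hB hR0 hR with hW
  have hgw : ∀ k, MemLp (fun x => W.gw x (height k)) 2 := fun k =>
    (memLp_two_iff_integrable_sq_norm (W.continuous_gw (height_mem k).1).aestronglyMeasurable).2
      (W.integrable_gw_sq hn1 (height_mem k).1)
  have hwt : ∀ k, MemLp (fun x => W.wt x (height k)) 2 := fun k =>
    (memLp_two_iff_integrable_sq (W.continuous_wt (height_mem k).1).aestronglyMeasurable).2
      (W.integrable_wt_sq hn1 (height_mem k).1)
  have hlim : MemLp (fun x => -(kerMass n * g x)) 2 :=
    ((hg.memLp_of_hasCompactSupport hgc).const_mul _).neg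
  obtain ⟨C, hC0, hC⟩ := exists_uniform_bound hn hg hB hR0 hR
  have hconv : Tendsto (fun k => eLpNorm ((fun x => W.wt x (height k)) -
      fun x => -(kerMass n * g x)) 2 volume) atTop (𝓝 0) := by
    refine tendsto_eLpNorm_two_zero (fun k => (hwt k).sub hlim) ?_
    rw [← integral_zero (Euc n) ℝ]
    refine tendsto_integral_filter_of_dominated_convergence
      (fun x => (2 * C) ^ 2 * weight x ^ (n + 1)) (.of_forall fun k => ?_)
      (.of_forall fun k => .of_forall fun x => ?_) (integrable_weight_pow.const_mul _)
      (.of_forall fun x => ?_)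
    · exact (((hwt k).sub hlim).integrable_norm_pow two_ne_zero).aestronglyMeasurable
    · have h1 : |kerMass n * g x| ≤ C * weight x ^ n := by
        have h2 := ((tendsto_conv_kerT hg hgc x).comp tendsto_height).abs
        rw [abs_neg] at h2
        exact le_of_tendsto' h2 fun k => (hC _ (height_mem k) x).2
      rw [norm_pow, norm_norm, norm_eq_abs, sq_abs]
      refine sq_le_weight hn1 x ?_
      have h3 := (hC _ (height_mem k) x).2
      have h4 : |W.wt x (height k) + kerMass n * g x| ≤ _ := abs_add_le _ _
      simp only [Pi.sub_apply, sub_neg_eq_add]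
      have h5 : |W.wt x (height k)| ≤ C * weight x ^ n := h3
      linarith
    · have h2 := ((tendsto_conv_kerT hg hgc x).comp tendsto_height).sub_const
        (-(kerMass n * g x))
      simpa [hW, newtonPotential] using h2.norm.pow 2
  have hH := (Lp.tendsto_Lp_iff_tendsto_eLpNorm'' _ hwt _ hlim).2 hconv
  have hdist : ∀ k l, dist ((hgw k).toLp _) ((hgw l).toLp _) =
      dist ((hwt k).toLp _) ((hwt l).toLp _) := by
    intro k l
    rw [Lp.dist_def, Lp.dist_def]
    congr 1
    rw [eLpNorm_congr_ae ((hgw k).coeFn_toLp.sub (hgw l).coeFn_toLp),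
      eLpNorm_congr_ae ((hwt k).coeFn_toLp.sub (hwt l).coeFn_toLp),
      eLpNorm_two_eq_ofReal ((hgw k).sub (hgw l)), eLpNorm_two_eq_ofReal ((hwt k).sub (hwt l))]
    have := W.integral_gw_sub_sq hn1 (height_mem k).1 (height_mem l).1
    simp only [Pi.sub_apply, norm_eq_abs, sq_abs]
    rw [this]
  have hcauchy : CauchySeq fun k => (hgw k).toLp _ := by
    rw [cauchySeq_iff_tendsto_dist_atTop_0]
    simp only [hdist]
    exact cauchySeq_iff_tendsto_dist_atTop_0.1 hH.cauchySeq
  obtain ⟨G, hG⟩ := cauchySeq_tendsto_of_complete hcauchy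
  refine ⟨G, Lp.memLp G, hgw, ?_⟩
  rw [← Lp.toLp_coeFn G (Lp.memLp G)] at hG
  exact (Lp.tendsto_Lp_iff_tendsto_eLpNorm'' _ hgw _ (Lp.memLp G)).1 hG

end BoundaryLimit

section Mollifier

variable {n : ℕ} {F : Type*} [NormedAddCommGroup F] [NormedSpace ℝ F]

lemma exists_mollifier (n : ℕ) : ∃ ψ : Euc n → ℝ, ContDiff ℝ 1 ψ ∧ HasCompactSupport ψ ∧
    (∀ z, 0 ≤ ψ z) ∧ ∫ z, ψ z = 1 ∧ tsupport ψ ⊆ closedBall 0 1 := by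
  let η : ContDiffBump (0 : Euc n) := ⟨1 / 2, 1, by norm_num, by norm_num⟩
  exact ⟨η.normed volume, η.contDiff_normed, η.hasCompactSupport_normed, η.nonneg_normed,
    η.integral_normed, (η.tsupport_normed_eq (μ := volume)).subset⟩

lemma integral_comp_add_smul (f : Euc n → F) (x : Euc n) {t : ℝ} (ht : 0 < t) :
    ∫ z, f (x + t • z) = (t ^ n)⁻¹ • ∫ y, f y := by
  rw [Measure.integral_comp_smul volume (fun y => f (x + y)) t, finrank_euclideanSpace_fin,
    abs_of_pos (by positivity), integral_add_left_eq_self]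

lemma integrable_comp_add_smul {F : Type*} [NormedAddCommGroup F] {f : Euc n → F}
    (hf : Integrable f) (x : Euc n) {t : ℝ} (ht : 0 < t) : Integrable fun z => f (x + t • z) :=
  (hf.comp_add_left x).comp_smul ht.ne'

variable {ψ : Euc n → ℝ} {G : Euc n → F}

lemma integrable_smul_dilation (hψ : Continuous ψ) (hψc : HasCompactSupport ψ)
    (hG : LocallyIntegrable G) (x : Euc n) {t : ℝ} (ht : 0 < t) :
    Integrable fun z => ψ z • G (x + t • z) := by
  have hψ' : HasCompactSupport fun y => ψ (t⁻¹ • (y - x)) := by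
    have h1 : HasCompactSupport fun y => ψ (t⁻¹ • y) := hψc.comp_smul (inv_ne_zero ht.ne')
    exact h1.comp_homeomorph (Homeomorph.subRight x)
  have h := hG.integrable_smul_left_of_hasCompactSupport
    (by fun_prop : Continuous fun y => ψ (t⁻¹ • (y - x))) hψ'
  simpa [ht.ne'] using integrable_comp_add_smul h x ht

/-- Lebesgue differentiation for a compactly supported averaging kernel. -/
lemma ae_tendsto_integral_smul_dilation [CompleteSpace F] (hψ : Continuous ψ)
    (hψc : HasCompactSupport ψ) (hψ1 : ∫ z, ψ z = 1) (hψs : tsupport ψ ⊆ closedBall 0 1)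
    (hG : LocallyIntegrable G) :
    ∀ᵐ x, Tendsto (fun t : ℝ => ∫ z, ψ z • G (x + t • z)) (𝓝[>] 0) (𝓝 (G x)) := by
  obtain ⟨M, hM⟩ := hψ.bounded_above_of_compact_support hψc
  have hM0 : 0 ≤ M := (norm_nonneg _).trans (hM 0)
  filter_upwards [IsUnifLocDoublingMeasure.ae_tendsto_average_norm_sub volume hG 1] with x hx
  have h1 := hx (l := 𝓝[>] (0 : ℝ)) (fun _ => x) id tendsto_id
    (by filter_upwards [self_mem_nhdsWithin] with t ht
        simpa using (show (0 : ℝ) < t from ht).le)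
  have h2 := h1.const_mul (M * (volume : Measure (Euc n)).real (closedBall 0 1))
  simp only [mul_zero, id] at h2
  rw [tendsto_iff_norm_sub_tendsto_zero]
  refine squeeze_zero' (.of_forall fun _ => norm_nonneg _) ?_ h2
  filter_upwards [self_mem_nhdsWithin] with t ht
  have ht0 : 0 < t := ht
  have hintg := integrable_smul_dilation hψ hψc hG x ht0
  have hG' : IntegrableOn (fun y => ‖G y - G x‖) (closedBall x t) :=
    ((hG.integrableOn_isCompact (isCompact_closedBall x t)).sub
      (integrableOn_const measure_closedBall_lt_top.ne)).norm
  have h3 : (∫ z, ψ z • G (x + t • z)) - G x = ∫ z, ψ z • (G (x + t • z) - G x) := by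
    simp only [smul_sub]
    rw [integral_sub hintg ((hψ.integrable_of_hasCompactSupport hψc).smul_const _),
      integral_smul_const, hψ1, one_smul]
  have h4 : ∀ z, ‖ψ z • (G (x + t • z) - G x)‖ ≤
      (closedBall x t).indicator (fun y => M * ‖G y - G x‖) (x + t • z) := by
    intro z
    by_cases hz : z ∈ closedBall (0 : Euc n) 1
    · have : x + t • z ∈ closedBall x t := by
        rw [mem_closedBall_zero_iff] at hz
        rw [mem_closedBall_iff_norm, add_sub_cancel_left, norm_smul, norm_of_nonneg ht0.le]
        exact mul_le_of_le_one_right ht0.le hz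
      rw [indicator_of_mem this, norm_smul]
      exact mul_le_mul_of_nonneg_right (hM z) (norm_nonneg _)
    · rw [image_eq_zero_of_notMem_tsupport fun h => hz (hψs h), zero_smul, norm_zero]
      exact indicator_nonneg (fun y _ => by positivity) _
  rw [h3]
  refine (norm_integral_le_of_norm_le (integrable_comp_add_smul
    ((integrable_indicator_iff measurableSet_closedBall).2 (hG'.const_mul M)) x ht0)
    (.of_forall h4)).trans (le_of_eq ?_)
  rw [integral_comp_add_smul _ x ht0, integral_indicator measurableSet_closedBall,
    integral_const_mul, setAverage_eq, Measure.addHaar_real_closedBall volume x ht0.le,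
    Measure.addHaar_real_closedBall volume (0 : Euc n) zero_le_one]
  have hb : 0 < (volume : Measure (Euc n)).real (ball 0 1) :=
    ENNReal.toReal_pos (measure_ball_pos volume _ one_pos).ne' measure_ball_lt_top.ne
  simp only [finrank_euclideanSpace_fin, smul_eq_mul, one_pow, one_mul]
  field_simp

lemma tendsto_integral_smul_of_eLpNorm {Fs : ℕ → Euc n → F} {φ : Euc n → ℝ} (hφ : MemLp φ 2)
    (hFs : ∀ k, MemLp (Fs k) 2) (hG : MemLp G 2)
    (h : Tendsto (fun k => eLpNorm (fun x => Fs k x - G x) 2 volume) atTop (𝓝 0)) :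
    Tendsto (fun k => ∫ x, φ x • Fs k x) atTop (𝓝 (∫ x, φ x • G x)) := by
  refine tendsto_integral_of_L1' _ (memLp_one_iff_integrable.1 (hG.smul hφ)).aestronglyMeasurable
    (.of_forall fun k => memLp_one_iff_integrable.1 ((hFs k).smul hφ)) ?_
  have h1 := ENNReal.Tendsto.const_mul (a := eLpNorm φ 2 volume) h (.inr hφ.eLpNorm_ne_top)
  rw [mul_zero] at h1
  refine tendsto_of_tendsto_of_tendsto_of_le_of_le tendsto_const_nhds h1 (fun _ => zero_le)
    fun k => ?_
  have h2 := eLpNorm_smul_le_mul_eLpNorm (p := 2) (q := 2) (r := 1) ((hFs k).sub hG).1 hφ.1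
  refine le_of_eq_of_le ?_ h2
  congr 1 with x
  simp [smul_sub]

end Mollifier

section BoundaryDifferentiability

variable {n : ℕ} {g : Euc n → ℝ}

lemma hasFDerivAt_conv_newtonKer (hg : Continuous g) (hgc : HasCompactSupport g) {t : ℝ}
    (ht : 0 < t) (x : Euc n) :
    HasFDerivAt (conv g newtonKer · t) (innerSL ℝ (conv g kerGrad x t)) x := by
  rw [innerSL_conv hg hgc (continuous_kerGrad ht)]
  exact hasFDerivAt_conv hg hgc (fun z => hasFDerivAt_newtonKer z ht)
    ((innerSL ℝ).continuous.comp (continuous_kerGrad ht)) x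

lemma norm_le_of_forall_abs_inner_le {w : Euc n} {K : ℝ} (hK : 0 ≤ K)
    (h : ∀ v, |inner ℝ w v| ≤ K * ‖v‖) : ‖w‖ ≤ K := by
  rw [← innerSL_apply_norm ℝ w]
  exact ContinuousLinearMap.opNorm_le_bound _ hK h

lemma eventually_forall_abs_sub_le (hg : Continuous g) (x : Euc n) {ε : ℝ} (hε : 0 < ε) :
    ∀ᶠ t in 𝓝[>] (0 : ℝ), ∀ y ∈ closedBall x t, |g y - g x| ≤ ε := by
  obtain ⟨δ, hδ, h⟩ := Metric.continuous_iff.1 hg x ε hε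
  filter_upwards [Ioo_mem_nhdsGT hδ] with t ht y hy
  exact (h y ((mem_closedBall.1 hy).trans_lt ht.2)).le

/-- The horizontal gradient of the potential varies little at the scale of the height. -/
lemma eventually_norm_conv_kerGrad_sub_le (hn : 1 ≤ n) (hg : Continuous g)
    (hgc : HasCompactSupport g) {ε : ℝ} (hε : 0 < ε) :
    ∀ᶠ t in 𝓝[>] (0 : ℝ), ∀ x, ∀ y ∈ closedBall x t,
      ‖conv g kerGrad y t - conv g kerGrad x t‖ ≤ ε := by
  filter_upwards [eventually_norm_smul_conv_kerHess_le hn hg hgc hε, self_mem_nhdsWithin]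
    with t h ht x y hy
  have ht0 : 0 < t := ht
  have hd : ∀ z ∈ (univ : Set (Euc n)),
      HasFDerivWithinAt (conv g kerGrad · t) (conv g kerHess z t) univ z := fun z _ =>
    (hasFDerivAt_conv hg hgc (fun z => hasFDerivAt_kerGrad z ht0)
      (continuous_kerHess ht0) z).hasFDerivWithinAt
  have hb : ∀ z ∈ (univ : Set (Euc n)), ‖conv g kerHess z t‖ ≤ ε / t := fun z _ => by
    rw [le_div_iff₀' ht0]
    exact h z
  refine (convex_univ.norm_image_sub_le_of_norm_hasFDerivWithin_le hd hb (mem_univ x)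
    (mem_univ y)).trans ?_
  rw [mem_closedBall_iff_norm] at hy
  calc ε / t * ‖y - x‖ ≤ ε / t * t := by gcongr
    _ = ε := by field_simp

lemma inner_integral_dilation (hg : Continuous g) (hgc : HasCompactSupport g) {ψ : Euc n → ℝ}
    (hψ : ContDiff ℝ 1 ψ) (hψc : HasCompactSupport ψ) (x v : Euc n) {s t : ℝ} (hs : 0 < s) :
    t * inner ℝ (∫ z, ψ z • conv g kerGrad (x + t • z) s) v =
      -∫ z, fderiv ℝ ψ z v * conv g newtonKer (x + t • z) s := by
  have hY : ∀ z, HasFDerivAt (fun z => conv g newtonKer (x + t • z) s)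
      (t • innerSL ℝ (conv g kerGrad (x + t • z) s)) z := by
    intro z
    have h1 : HasFDerivAt (fun z : Euc n => x + t • z) (t • ContinuousLinearMap.id ℝ (Euc n)) z :=
      ((hasFDerivAt_id z).const_smul t).const_add x
    refine ((hasFDerivAt_conv_newtonKer hg hgc hs (x + t • z)).comp z h1).congr_fderiv ?_
    ext w
    simp
  have hc : Continuous fun z => conv g kerGrad (x + t • z) s :=
    (continuous_conv hg hgc (continuous_kerGrad hs)).comp (by fun_prop)
  have hψ0 := hψ.continuous
  have h2 := integral_smul_fderiv_eq_neg hψ hψc hY (by fun_prop) v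
  simp only [smul_eq_mul] at h2
  rw [← h2, real_inner_comm, ← integral_inner
    ((by fun_prop : Continuous fun z => ψ z • conv g kerGrad (x + t • z) s)
      |>.integrable_of_hasCompactSupport hψc.smul_right), ← integral_const_mul]
  congr 1 with z
  simp only [inner_smul_right, smul_apply, innerSL_apply_apply, smul_eq_mul,
    real_inner_comm v]
  ring

/-- Averages of the horizontal gradient at different heights are close to each other. -/
lemma eventually_norm_integral_dilation_sub_le (hn : 2 ≤ n) (hg : Continuous g)
    (hgc : HasCompactSupport g) {ψ : Euc n → ℝ} (hψ : ContDiff ℝ 1 ψ) (hψc : HasCompactSupport ψ)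
    (hψs : tsupport ψ ⊆ closedBall 0 1) (x : Euc n) {ε : ℝ} (hε : 0 < ε) :
    ∀ᶠ t in 𝓝[>] (0 : ℝ), ∀ s, 0 < s → s ≤ t →
      ‖(∫ z, ψ z • conv g kerGrad (x + t • z) t) -
        ∫ z, ψ z • conv g kerGrad (x + t • z) s‖ ≤ ε := by
  have hc := kerMass_pos hn
  have hψ' : Continuous (fderiv ℝ ψ) := hψ.continuous_fderiv one_ne_zero
  obtain ⟨A, hA⟩ := hψ'.bounded_above_of_compact_support (hψc.fderiv ℝ)
  have hA0 : 0 ≤ A := (norm_nonneg _).trans (hA 0)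
  set V := (volume : Measure (Euc n)).real (closedBall 0 1)
  have hV : 0 ≤ V := measureReal_nonneg
  have hD : 0 < A * V * (1 + kerMass n) + 1 := by positivity
  set δ := ε / (A * V * (1 + kerMass n) + 1) with hδ_def
  have hδ : 0 < δ := by positivity
  filter_upwards [eventually_abs_conv_newtonKer_sub_le hg hgc hδ,
    eventually_forall_abs_sub_le hg x hδ, self_mem_nhdsWithin] with t h1 h2 ht s hs hst
  have ht0 : 0 < t := ht
  have hδε : A * V * (1 + kerMass n) * δ ≤ ε := by
    rw [hδ_def, ← mul_div_assoc, div_le_iff₀ hD]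
    nlinarith
  refine le_trans ?_ hδε
  refine norm_le_of_forall_abs_inner_le (by positivity) fun v => ?_
  rw [← mul_le_mul_iff_right₀ ht0, ← abs_of_pos ht0, ← abs_mul, abs_of_pos ht0, inner_sub_left,
    mul_sub,
    inner_integral_dilation hg hgc hψ hψc x v ht0, inner_integral_dilation hg hgc hψ hψc x v hs]
  have hψv : Continuous fun z => fderiv ℝ ψ z v := by fun_prop
  have hψvc : HasCompactSupport fun z => fderiv ℝ ψ z v := hψc.fderiv_apply ℝ v
  have hcont : ∀ r, 0 < r → Continuous fun z => conv g newtonKer (x + t • z) r := fun r hr =>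
    (continuous_conv hg hgc (continuous_newtonKer hr)).comp (by fun_prop)
  have hintg : ∀ r, 0 < r → Integrable fun z => fderiv ℝ ψ z v * conv g newtonKer (x + t • z) r :=
    fun r hr => (hψv.mul (hcont r hr)).integrable_of_hasCompactSupport hψvc.mul_right
  have hzero : ∫ z, fderiv ℝ ψ z v = 0 := by
    have := integral_smul_fderiv_eq_neg hψ hψc (Y := fun _ => (1 : ℝ)) (Y' := fun _ => 0)
      (fun x => hasFDerivAt_const _ _) continuous_const v
    simpa using this
  have heq : -(∫ z, fderiv ℝ ψ z v * conv g newtonKer (x + t • z) t) -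
      -∫ z, fderiv ℝ ψ z v * conv g newtonKer (x + t • z) s =
      -∫ z, fderiv ℝ ψ z v * (conv g newtonKer (x + t • z) t - conv g newtonKer (x + t • z) s +
        kerMass n * (t - s) * g x) := by
    simp only [mul_add, mul_sub]
    rw [integral_add ?_ ((hψv.integrable_of_hasCompactSupport hψvc).mul_const _),
      integral_sub (hintg t ht0) (hintg s hs),
      integral_mul_const, hzero]
    · ring
    · exact (hintg t ht0).sub (hintg s hs)
  have hsupp : ∀ z ∉ closedBall (0 : Euc n) 1, fderiv ℝ ψ z v *
      (conv g newtonKer (x + t • z) t - conv g newtonKer (x + t • z) s +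
        kerMass n * (t - s) * g x) = 0 := by
    intro z hz
    rw [fderiv_of_notMem_tsupport ℝ fun h => hz (hψs h)]
    simp
  rw [heq, abs_neg, ← setIntegral_eq_integral_of_forall_compl_eq_zero hsupp, ← norm_eq_abs]
  refine (norm_setIntegral_le_of_norm_le_const (C := A * ‖v‖ * ((1 + kerMass n) * δ * t))
    measure_closedBall_lt_top fun z hz => ?_).trans (le_of_eq (by ring))
  rw [norm_mul]
  refine mul_le_mul ((fderiv ℝ ψ z).le_of_opNorm_le (hA z) v) ?_ (norm_nonneg _) (by positivity)
  have hy : x + t • z ∈ closedBall x t := by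
    rw [mem_closedBall_zero_iff] at hz
    rw [mem_closedBall_iff_norm, add_sub_cancel_left, norm_smul, norm_of_nonneg ht0.le]
    exact mul_le_of_le_one_right ht0.le hz
  have h3 := h1 s hs hst (x + t • z)
  have h4 := h2 _ hy
  have h5 : |kerMass n * (t - s) * (g (x + t • z) - g x)| ≤ kerMass n * (t - s) * δ := by
    have : 0 ≤ kerMass n * (t - s) := mul_nonneg hc.le (by linarith)
    rw [abs_mul, abs_of_nonneg this]
    gcongr
  have h6 : conv g newtonKer (x + t • z) t - conv g newtonKer (x + t • z) s +
      kerMass n * (t - s) * g x = (conv g newtonKer (x + t • z) t + kerMass n * t * g (x + t • z) -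
        (conv g newtonKer (x + t • z) s + kerMass n * s * g (x + t • z))) -
        kerMass n * (t - s) * (g (x + t • z) - g x) := by ring
  rw [norm_eq_abs, h6]
  refine (abs_sub _ _).trans ?_
  have h7 : δ * (t - s) ≤ δ * t := by gcongr; linarith
  have h8 : kerMass n * (t - s) * δ ≤ kerMass n * t * δ := by gcongr; linarith
  linarith

/-- The horizontal gradient of the potential converges at almost every boundary point. -/
lemma ae_tendsto_conv_kerGrad (hn : 2 ≤ n) (hg : Continuous g) (hgc : HasCompactSupport g)
    {G : Euc n → Euc n} (hG : MemLp G 2) (hk : ∀ k, MemLp (conv g kerGrad · (height k)) 2)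
    (h : Tendsto (fun k => eLpNorm (fun x => conv g kerGrad x (height k) - G x) 2 volume)
      atTop (𝓝 0)) : ∀ᵐ x, Tendsto (conv g kerGrad x) (𝓝[>] 0) (𝓝 (G x)) := by
  obtain ⟨ψ, hψ, hψc, hψ0, hψ1, hψs⟩ := exists_mollifier n
  have hGl : LocallyIntegrable G := hG.locallyIntegrable (by norm_num)
  filter_upwards [ae_tendsto_integral_smul_dilation hψ.continuous hψc hψ1 hψs hGl] with x hx
  suffices hd : Tendsto (fun t => conv g kerGrad x t - ∫ z, ψ z • G (x + t • z)) (𝓝[>] 0) (𝓝 0) by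
    simpa using hd.add hx
  rw [Metric.tendsto_nhds]
  intro ε hε
  filter_upwards [eventually_norm_integral_dilation_sub_le hn hg hgc hψ hψc hψs x
    (by positivity : 0 < ε / 3), eventually_norm_conv_kerGrad_sub_le (by lia) hg hgc
    (by positivity : 0 < ε / 3), self_mem_nhdsWithin] with t h1 h2 ht
  have ht0 : 0 < t := ht
  have hcont : Continuous fun z => conv g kerGrad (x + t • z) t :=
    (continuous_conv hg hgc (continuous_kerGrad ht0)).comp (by fun_prop)
  have hψcont := hψ.continuous
  have hψi := hψcont.integrable_of_hasCompactSupport hψc (μ := volume)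
  have h3 : ‖(∫ z, ψ z • conv g kerGrad (x + t • z) t) - conv g kerGrad x t‖ ≤ ε / 3 := by
    have h4 : (∫ z, ψ z • conv g kerGrad (x + t • z) t) - conv g kerGrad x t =
        ∫ z, ψ z • (conv g kerGrad (x + t • z) t - conv g kerGrad x t) := by
      simp only [smul_sub]
      rw [integral_sub ((by fun_prop : Continuous fun z => ψ z • conv g kerGrad (x + t • z) t)
        |>.integrable_of_hasCompactSupport hψc.smul_right) (hψi.smul_const _),
        integral_smul_const, hψ1, one_smul]
    rw [h4]
    refine (norm_integral_le_of_norm_le (hψi.mul_const (ε / 3)) (.of_forall fun z => ?_)).trans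
      (by rw [integral_mul_const, hψ1, one_mul])
    rw [norm_smul, norm_of_nonneg (hψ0 z)]
    by_cases hz : z ∈ closedBall (0 : Euc n) 1
    · refine mul_le_mul_of_nonneg_left (h2 x _ ?_) (hψ0 z)
      rw [mem_closedBall_zero_iff] at hz
      rw [mem_closedBall_iff_norm, add_sub_cancel_left, norm_smul, norm_of_nonneg ht0.le]
      exact mul_le_of_le_one_right ht0.le hz
    · simp [image_eq_zero_of_notMem_tsupport fun h => hz (hψs h)]
  have h5 : Tendsto (fun k => ∫ z, ψ z • conv g kerGrad (x + t • z) (height k)) atTop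
      (𝓝 (∫ z, ψ z • G (x + t • z))) := by
    have hφc : HasCompactSupport fun y => ψ (t⁻¹ • (y - x)) :=
      HasCompactSupport.comp_homeomorph (f := fun y => ψ (t⁻¹ • y))
        (hψc.comp_smul (inv_ne_zero ht0.ne')) (Homeomorph.subRight x)
    have h6 := (tendsto_integral_smul_of_eLpNorm
      ((by fun_prop : Continuous fun y => ψ (t⁻¹ • (y - x))).memLp_of_hasCompactSupport hφc)
      hk hG h).const_smul ((t ^ n)⁻¹)
    simpa [← integral_comp_add_smul _ x ht0, ht0.ne'] using h6
  have h7 : ‖(∫ z, ψ z • conv g kerGrad (x + t • z) t) - ∫ z, ψ z • G (x + t • z)‖ ≤ ε / 3 :=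
    le_of_tendsto (h5.const_sub _).norm ((tendsto_nhdsWithin_iff.1 tendsto_height).1.eventually
      (ge_mem_nhds ht0) |>.mono fun k hk => h1 _ (height_mem k).1 hk)
  rw [dist_zero_right, ← sub_add_sub_cancel' (∫ z, ψ z • conv g kerGrad (x + t • z) t)]
  refine (norm_add_le _ _).trans_lt ?_
  rw [norm_sub_rev] at h3
  linarith

/-- The boundary value of the potential is differentiable wherever the horizontal gradient of the
potential converges. -/
lemma hasFDerivAt_boundary (hn : 2 ≤ n) (hg : Continuous g) (hgc : HasCompactSupport g)
    {u₀ : Euc n → ℝ} (hu : ∀ x, Tendsto (conv g newtonKer x) (𝓝[>] 0) (𝓝 (u₀ x))) {x p : Euc n}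
    (hp : Tendsto (conv g kerGrad x) (𝓝[>] 0) (𝓝 p)) : HasFDerivAt u₀ (innerSL ℝ p) x := by
  have hc := kerMass_pos hn
  rw [hasFDerivAt_iff_isLittleO_nhds_zero, Asymptotics.isLittleO_iff]
  intro ε hε
  set δ := ε / (4 + kerMass n) with hδ_def
  have hδ : 0 < δ := by positivity
  have hδε : ε = (4 + kerMass n) * δ := by rw [hδ_def]; field_simp
  have hexp : ∀ᶠ t in 𝓝[>] (0 : ℝ), ∀ y,
      |conv g newtonKer y t + kerMass n * t * g y - u₀ y| ≤ δ * t := by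
    filter_upwards [eventually_abs_conv_newtonKer_sub_le hg hgc hδ, self_mem_nhdsWithin]
      with t h ht y
    have ht0 : 0 < t := ht
    have hid : Tendsto (fun s : ℝ => s) (𝓝[>] 0) (𝓝 0) := nhdsWithin_le_nhds
    have h1 : Tendsto (fun s => conv g newtonKer y s + kerMass n * s * g y) (𝓝[>] 0)
        (𝓝 (u₀ y)) := by
      simpa using (hu y).add ((hid.const_mul (kerMass n)).mul_const (g y))
    have h2 : Tendsto (fun s => δ * (t - s)) (𝓝[>] 0) (𝓝 (δ * t)) := by
      simpa using (hid.const_sub t).const_mul δ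
    refine le_of_tendsto_of_tendsto (h1.const_sub _).abs h2 ?_
    filter_upwards [Ioo_mem_nhdsGT ht0] with s hs
    exact h s hs.1 hs.2.le y
  obtain ⟨r, hr, hsub⟩ := mem_nhdsGT_iff_exists_Ioo_subset.1 (hexp.and
    ((eventually_forall_abs_sub_le hg x hδ).and
      ((eventually_norm_conv_kerGrad_sub_le (by lia) hg hgc hδ).and
        (Metric.tendsto_nhds.1 hp δ hδ))))
  filter_upwards [ball_mem_nhds (0 : Euc n) hr] with v hv
  rcases eq_or_ne v 0 with rfl | hv0
  · simp
  have ht : 0 < ‖v‖ := norm_pos_iff.2 hv0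
  obtain ⟨h1, h2, h3, h4⟩ := hsub ⟨ht, by simpa using hv⟩
  have hmem : x + v ∈ closedBall x ‖v‖ := by simp
  set t := ‖v‖ with ht_def
  have h5 : |conv g newtonKer (x + v) t - conv g newtonKer x t -
      inner ℝ (conv g kerGrad x t) v| ≤ δ * t := by
    have h6 := (convex_closedBall x t).norm_image_sub_le_of_norm_hasFDerivWithin_le'
      (f := (conv g newtonKer · t)) (φ := innerSL ℝ (conv g kerGrad x t)) (C := δ)
      (fun y _ => (hasFDerivAt_conv_newtonKer hg hgc ht y).hasFDerivWithinAt)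
      (fun y hy => by
        rw [← map_sub, innerSL_apply_norm]
        exact h3 x y hy) (mem_closedBall_self ht.le) hmem
    simpa using h6
  have h6 : |inner ℝ (conv g kerGrad x t - p) v| ≤ δ * t := by
    refine (abs_real_inner_le_norm _ _).trans ?_
    rw [dist_eq_norm] at h4
    exact mul_le_mul_of_nonneg_right h4.le ht.le
  have h7 : |kerMass n * t * (g (x + v) - g x)| ≤ kerMass n * t * δ := by
    rw [abs_mul, abs_of_nonneg (by positivity)]
    exact mul_le_mul_of_nonneg_left (h2 _ hmem) (by positivity)
  have h8 := h1 (x + v)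
  have h9 := h1 x
  rw [inner_sub_left] at h6
  rw [hδε, norm_eq_abs, innerSL_apply_apply]
  rw [abs_le] at *
  constructor <;> linarith [h5.1, h5.2, h6.1, h6.2, h7.1, h7.2, h8.1, h8.2, h9.1, h9.2]

end BoundaryDifferentiability

section Stability

variable {n : ℕ}

open scoped Manifold ContDiff in
/-- A smooth cutoff function together with its gradient. -/
lemma exists_cutoff {K U : Set (Euc n)} (hK : IsClosed K) (hU : IsOpen U)
    (hUb : Bornology.IsBounded U) (hKU : K ⊆ U) :
    ∃ (χ : Euc n → ℝ) (χ' : Euc n → Euc n) (M : ℝ), (∀ x, HasFDerivAt χ (innerSL ℝ (χ' x)) x) ∧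
      Continuous χ' ∧ (∀ x, ‖χ' x‖ ≤ M) ∧ (∀ x, χ x ∈ Icc (0 : ℝ) 1) ∧ (∀ x ∉ U, χ x = 0) ∧
      ∀ x ∈ K, χ x = 1 := by
  obtain ⟨f, hf0, hf1, hf⟩ := exists_contMDiffMap_zero_one_of_isClosed (n := 1)
    (𝓘(ℝ, Euc n)) hU.isClosed_compl hK (disjoint_left.2 fun x hx hx' => hx (hKU hx'))
  have hfd : ContDiff ℝ 1 f := f.contMDiff.contDiff
  have hfc : HasCompactSupport f := by
    refine HasCompactSupport.intro hUb.isCompact_closure fun x hx => ?_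
    exact hf0 fun h => hx (subset_closure h)
  have hc : Continuous (fderiv ℝ f) := hfd.continuous_fderiv one_ne_zero
  obtain ⟨M, hM⟩ := hc.bounded_above_of_compact_support (hfc.fderiv ℝ)
  refine ⟨f, fun x => (InnerProductSpace.toDual ℝ (Euc n)).symm (fderiv ℝ f x), M, fun x => ?_,
    (InnerProductSpace.toDual ℝ (Euc n)).symm.continuous.comp hc, fun x => ?_, hf,
    fun x hx => hf0 hx, fun x hx => hf1 hx⟩
  · refine (hfd.differentiable one_ne_zero x).hasFDerivAt.congr_fderiv ?_
    ext v
    simp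
  · rw [LinearIsometryEquiv.norm_map]
    exact hM x

lemma tendsto_setIntegral_norm_sq {F : Type*} [NormedAddCommGroup F]
    {Fs : ℕ → Euc n → F} {G : Euc n → F} (hFs : ∀ k, MemLp (Fs k) 2) (hG : MemLp G 2)
    (h : Tendsto (fun k => eLpNorm (fun x => Fs k x - G x) 2 volume) atTop (𝓝 0))
    (U : Set (Euc n)) :
    Tendsto (fun k => ∫ x in U, ‖Fs k x‖ ^ 2) atTop (𝓝 (∫ x in U, ‖G x‖ ^ 2)) := by
  have hFU : ∀ k, MemLp (Fs k) 2 (volume.restrict U) := fun k => (hFs k).restrict U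
  have hGU : MemLp G 2 (volume.restrict U) := hG.restrict U
  have h1 : Tendsto (fun k => eLpNorm (Fs k - G) 2 (volume.restrict U)) atTop (𝓝 0) :=
    tendsto_of_tendsto_of_tendsto_of_le_of_le tendsto_const_nhds h (fun _ => zero_le)
      fun k => eLpNorm_mono_measure _ Measure.restrict_le_self
  have h2 := ((Lp.tendsto_Lp_iff_tendsto_eLpNorm'' _ hFU _ hGU).2 h1).norm.pow 2
  have h3 : ∀ {f : Euc n → F} (hf : MemLp f 2 (volume.restrict U)),
      ‖hf.toLp f‖ ^ 2 = ∫ x in U, ‖f x‖ ^ 2 := by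
    intro f hf
    have h0 : 0 ≤ ∫ x in U, ‖f x‖ ^ 2 := integral_nonneg fun x => by positivity
    rw [Lp.norm_toLp, eLpNorm_two_eq_ofReal hf, ENNReal.toReal_ofReal (sqrt_nonneg _), sq_sqrt h0]
  simpa only [h3] using h2

variable {g : Euc n → ℝ}

/-- The energy estimate at the boundary. -/
lemma sq_kerMass_mul_integral_sq_le (hn : 2 ≤ n) (hg : Continuous g) {B R : ℝ}
    (hB : ∀ y, |g y| ≤ B) (hR0 : 0 ≤ R) (hR : Function.support g ⊆ closedBall 0 R)
    {u₀ : Euc n → ℝ} (hu : ∀ x, Tendsto (conv g newtonKer x) (𝓝[>] 0) (𝓝 (u₀ x)))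
    {G : Euc n → Euc n} (hG : MemLp G 2) (hk : ∀ k, MemLp (conv g kerGrad · (height k)) 2)
    (hlim : Tendsto (fun k => eLpNorm (fun x => conv g kerGrad x (height k) - G x) 2 volume)
      atTop (𝓝 0)) {χ : Euc n → ℝ} {χ' : Euc n → Euc n} {M : ℝ} {U : Set (Euc n)}
    (hU : MeasurableSet U) (hχ : ∀ x, HasFDerivAt χ (innerSL ℝ (χ' x)) x) (hχ' : Continuous χ')
    (hM : ∀ x, ‖χ' x‖ ≤ M) (hχ1 : ∀ x, χ x ∈ Icc (0 : ℝ) 1) (hχU : ∀ x ∉ U, χ x = 0)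
    (hχg : ∀ x ∈ Function.support g, χ x = 1) :
    kerMass n ^ 2 * ∫ x, g x ^ 2 ≤
      (∫ x in U, ‖G x‖ ^ 2) + M * (kerMass n * ∫ x, u₀ x * g x) := by
  have hn1 : 1 ≤ n := by lia
  have hgc := hasCompactSupport_of_support_subset hR
  have hχc : Continuous χ := continuous_iff_continuousAt.2 fun x => (hχ x).continuousAt
  have hχabs : ∀ x, |χ x| ≤ 1 := fun x => by rw [abs_of_nonneg (hχ1 x).1]; exact (hχ1 x).2
  set W := newtonPotential hn hg hB hR0 hR with hW
  obtain ⟨C, hC0, hC⟩ := exists_uniform_bound hn hg hB hR0 hR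
  have hCt : ∀ k x, |W.wt x (height k)| ≤ C * weight x ^ n := fun k x =>
    (hC _ (height_mem k) x).2
  have hCw : ∀ k x, |W.w x (height k)| ≤ C * weight x := fun k x => (hC _ (height_mem k) x).1
  have hwt : ∀ x, Tendsto (fun k => W.wt x (height k)) atTop (𝓝 (-(kerMass n * g x))) := fun x =>
    (tendsto_conv_kerT hg hgc x).comp tendsto_height
  have hw : ∀ x, Tendsto (fun k => W.w x (height k)) atTop (𝓝 (u₀ x)) := fun x =>
    (hu x).comp tendsto_height
  have h1 : Tendsto (fun k => ∫ x, χ x * W.wt x (height k) ^ 2) atTop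
      (𝓝 (kerMass n ^ 2 * ∫ x, g x ^ 2)) := by
    have heq : kerMass n ^ 2 * ∫ x, g x ^ 2 = ∫ x, χ x * (-(kerMass n * g x)) ^ 2 := by
      rw [← integral_const_mul]
      congr 1 with x
      by_cases hx : x ∈ Function.support g
      · rw [hχg x hx]; ring
      · rw [Function.notMem_support.1 hx]; ring
    rw [heq]
    refine tendsto_integral_filter_of_dominated_convergence
      (fun x => C ^ 2 * weight x ^ (n + 1)) (.of_forall fun k => ?_)
      (.of_forall fun k => .of_forall fun x => ?_) (integrable_weight_pow.const_mul _)
      (.of_forall fun x => ((hwt x).pow 2).const_mul _)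
    · have := W.continuous_wt (height_mem k).1
      exact (by fun_prop : Continuous fun x => χ x * W.wt x (height k) ^ 2).aestronglyMeasurable
    · rw [norm_mul, norm_eq_abs, norm_of_nonneg (sq_nonneg _)]
      exact (mul_le_of_le_one_left (sq_nonneg _) (hχabs x)).trans (sq_le_weight hn1 x (hCt k x))
  have h2 : Tendsto (fun k => W.flux (height k)) atTop (𝓝 (kerMass n * ∫ x, u₀ x * g x)) := by
    have heq : kerMass n * ∫ x, u₀ x * g x = ∫ x, u₀ x * -(-(kerMass n * g x)) := by
      rw [← integral_const_mul]
      congr 1 with x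
      ring
    rw [heq]
    refine tendsto_integral_filter_of_dominated_convergence
      (fun x => C ^ 2 * weight x ^ (n + 1)) (.of_forall fun k => ?_)
      (.of_forall fun k => .of_forall fun x => ?_) (integrable_weight_pow.const_mul _)
      (.of_forall fun x => (hw x).mul (hwt x).neg)
    · exact ((W.continuous_w (height_mem k).1).mul
        (W.continuous_wt (height_mem k).1).neg).aestronglyMeasurable
    · rw [norm_mul, norm_neg]
      calc _ ≤ (C * weight x) * (C * weight x ^ n) :=
          mul_le_mul (hCw k x) (hCt k x) (abs_nonneg _) (mul_nonneg hC0 (weight_pos x).le)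
        _ = _ := by ring
  have h3 := tendsto_setIntegral_norm_sq hk hG hlim U
  refine le_of_tendsto_of_tendsto' h1 (h3.add (h2.const_mul M)) fun k => ?_
  have ht := (height_mem k).1
  have hi1 : Integrable fun x => χ x * W.wt x (height k) ^ 2 :=
    (W.integrable_wt_sq hn1 ht).bdd_mul hχc.aestronglyMeasurable (.of_forall hχabs)
  have hi2 : Integrable fun x => χ x * ‖W.gw x (height k)‖ ^ 2 :=
    (W.integrable_gw_sq hn1 ht).bdd_mul hχc.aestronglyMeasurable (.of_forall hχabs)
  have h4 := (le_abs_self _).trans (W.abs_energyDiff_le hn1 hχ hχabs hχ' hM ht)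
  simp only [DecayingHarmonic.energyDiff, mul_sub] at h4
  rw [integral_sub hi1 hi2] at h4
  have h5 : ∫ x, χ x * ‖W.gw x (height k)‖ ^ 2 ≤ ∫ x in U, ‖W.gw x (height k)‖ ^ 2 := by
    rw [← integral_indicator hU]
    refine integral_mono hi2 ((W.integrable_gw_sq hn1 ht).indicator hU) fun x => ?_
    by_cases hx : x ∈ U
    · simp only [indicator_of_mem hx]
      exact mul_le_of_le_one_left (sq_nonneg _) (hχ1 x).2
    · simp [hχU x hx, indicator_of_notMem hx]
  have h6 : ∫ x in U, ‖W.gw x (height k)‖ ^ 2 = ∫ x in U, ‖conv g kerGrad x (height k)‖ ^ 2 := rfl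
  linarith

lemma setIntegral_mul_le_sqrt_mul_sqrt {U : Set (Euc n)} {u v : Euc n → ℝ}
    (hu : MemLp u 2 (volume.restrict U)) (hv : MemLp v 2 (volume.restrict U)) :
    ∫ x in U, u x * v x ≤ √(∫ x in U, u x ^ 2) * √(∫ x in U, v x ^ 2) := by
  have h := integral_mul_norm_le_Lp_mul_Lq (f := u) (g := v) HolderConjugate.two_two
    (μ := volume.restrict U) (by simpa using hu) (by simpa using hv)
  simp only [rpow_two, norm_eq_abs, sq_abs, ← sqrt_eq_rpow] at h
  refine (le_abs_self _).trans (abs_integral_le_integral_abs.trans ?_)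
  simpa only [abs_mul] using h

lemma le_of_sq_le {c M a b d : ℝ} (hc : 0 < c) (hM : 0 ≤ M) (ha : 0 ≤ a) (hb : 0 ≤ b) (hd : 0 ≤ d)
    (h : c ^ 2 * a ^ 2 ≤ d ^ 2 / 4 + M * (c * (b / 2 * a))) : ((1 + M) / c)⁻¹ * a ≤ b + d := by
  have hM1 : 0 < 1 + M := by linarith
  rw [inv_div, div_mul_eq_mul_div, div_le_iff₀ hM1]
  by_contra! hlt
  have hX : 0 ≤ c * a := by positivity
  nlinarith [mul_nonneg hM hb, mul_nonneg hM hd, mul_nonneg (mul_nonneg hM hb) hX]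

end Stability

/-- For `n ≥ 3`, `Ω` open bounded (with smooth boundary) and `Ω₁` open bounded
with `closure Ω ⊂ Ω₁`, there is `C > 0` such that for every continuous `g` supported in
`closure Ω`, the linearized data `h(x) = lim_{ε→0} ε⁻¹(K[εg](x) − |S^{n-1}|)` satisfies
`C⁻¹ ‖g‖_{L²(ℝⁿ)} ≤ ‖h‖_{H¹(Ω₁)}`. -/
theorem stability_of_linearized_data (n : ℕ) (hn : 3 ≤ n) (Ω Ω₁ : Set (Euc n))
    (hΩo : IsOpen Ω) (hΩb : Bornology.IsBounded Ω)
    (hΩ₁o : IsOpen Ω₁) (hΩ₁b : Bornology.IsBounded Ω₁) (hΩΩ₁ : closure Ω ⊆ Ω₁) :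
    ∃ C > 0, ∀ g h : Euc n → ℝ, Continuous g → Function.support g ⊆ closure Ω →
      (∀ x : Euc n, Filter.Tendsto
        (fun ε : ℝ => ε⁻¹ * (singlePixel (fun y => ε * g y) x - sphereVol n))
        (nhdsWithin 0 {(0 : ℝ)}ᶜ) (nhds (h x))) →
      C⁻¹ * L2norm g ≤ H1norm Ω₁ h := by
  obtain ⟨R, hR⟩ := hΩb.closure.subset_closedBall (0 : Euc n)
  have hn2 : 2 ≤ n := by lia
  have hc := kerMass_pos hn2
  obtain ⟨χ, χ', M, hχ, hχ', hM, hχ1, hχU, hχK⟩ :=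
    exists_cutoff isClosed_closure hΩ₁o hΩ₁b hΩΩ₁
  have hM0 : 0 ≤ M := (norm_nonneg _).trans (hM 0)
  refine ⟨(1 + M) / kerMass n, by positivity, fun g h hg hgΩ hlim => ?_⟩
  have hR0 : 0 ≤ max R 0 := le_max_right _ _
  have hgR : Function.support g ⊆ closedBall 0 (max R 0) :=
    (hgΩ.trans hR).trans (closedBall_subset_closedBall (le_max_left _ _))
  have hgc := hasCompactSupport_of_support_subset hgR
  obtain ⟨B, hB⟩ := hg.bounded_above_of_compact_support hgc
  have hh : h = fun x => -normalOp g x := funext fun x =>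
    tendsto_nhds_unique (hlim x) (tendsto_singlePixel_smul hg hB hR0 hgR x)
  set u₀ : Euc n → ℝ := fun x => normalOp g x / 2 with hu₀
  have hu : ∀ x, Tendsto (conv g newtonKer x) (𝓝[>] 0) (𝓝 (u₀ x)) := fun x =>
    tendsto_potential (by lia) hg hB hR0 hgR x
  have hhu : h = fun x => -2 * u₀ x := by
    rw [hh]
    funext x
    simp only [hu₀]
    ring
  obtain ⟨G, hG, hk, hGlim⟩ := exists_gradient_limit hn2 hg hB hR0 hgR
  have hfd : ∀ᵐ x, ‖fderiv ℝ h x‖ ^ 2 = 4 * ‖G x‖ ^ 2 := by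
    filter_upwards [ae_tendsto_conv_kerGrad hn2 hg hgc hG hk hGlim] with x hx
    have h1 := (hasFDerivAt_boundary hn2 hg hgc hu hx).const_mul (-2)
    rw [hhu, h1.fderiv, norm_smul, innerSL_apply_norm]
    norm_num
    ring
  have hd : ∫ x in Ω₁, ‖fderiv ℝ h x‖ ^ 2 = 4 * ∫ x in Ω₁, ‖G x‖ ^ 2 := by
    rw [← integral_const_mul]
    exact integral_congr_ae (ae_restrict_of_ae hfd)
  have hb : ∫ x in Ω₁, h x ^ 2 = 2 ^ 2 * ∫ x in Ω₁, u₀ x ^ 2 := by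
    rw [← integral_const_mul, hhu]
    congr 1 with x
    ring
  have hgΩ₁ : ∀ x ∉ Ω₁, g x = 0 := fun x hx =>
    Function.notMem_support.1 fun hx' => hx (hΩΩ₁ (hgΩ hx'))
  have hu2 : MemLp u₀ 2 (volume.restrict Ω₁) := by
    obtain ⟨C, hC0, hC⟩ := exists_uniform_bound hn2 hg hB hR0 hgR
    have : IsFiniteMeasure (volume.restrict Ω₁) := ⟨by simpa using hΩ₁b.measure_lt_top⟩
    refine MemLp.of_bound (C := C) ?_ (.of_forall fun x => ?_)
    · exact aestronglyMeasurable_of_tendsto_ae atTop (f := fun k x => conv g newtonKer x (height k))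
        (fun k => (continuous_conv hg hgc
          (continuous_newtonKer (height_mem k).1)).aestronglyMeasurable)
        (.of_forall fun x => (hu x).comp tendsto_height)
    · refine le_of_tendsto ((hu x).comp tendsto_height).norm (.of_forall fun k => ?_)
      exact ((hC _ (height_mem k) x).1).trans (mul_le_of_le_one_right hC0 (weight_le_one x))
  have hg2 : MemLp g 2 (volume.restrict Ω₁) := (hg.memLp_of_hasCompactSupport hgc).restrict _
  have hcs := setIntegral_mul_le_sqrt_mul_sqrt hu2 hg2
  rw [setIntegral_eq_integral_of_forall_compl_eq_zero fun x hx => by rw [hgΩ₁ x hx, mul_zero],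
    setIntegral_eq_integral_of_forall_compl_eq_zero (f := fun x => g x ^ 2) fun x hx => by
      rw [hgΩ₁ x hx, zero_pow two_ne_zero]] at hcs
  have henergy := sq_kerMass_mul_integral_sq_le hn2 hg hB hR0 hgR hu hG hk hGlim
    hΩ₁o.measurableSet hχ hχ' hM hχ1 hχU fun x hx => hχK x (hgΩ hx)
  simp only [L2norm, H1norm, ← sqrt_eq_rpow]
  refine le_of_sq_le hc hM0 (sqrt_nonneg _) (sqrt_nonneg _) (sqrt_nonneg _) ?_
  rw [sq_sqrt (integral_nonneg fun x => sq_nonneg _),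
    sq_sqrt (integral_nonneg fun x => sq_nonneg _),
    hd, hb, sqrt_mul (by positivity), sqrt_sq zero_le_two, mul_div_cancel_left₀ _ four_ne_zero,
    mul_div_cancel_left₀ _ two_ne_zero]
  refine henergy.trans ?_
  gcongr
end
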